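/- arXiv:2509.08425 — 3 statements merged into one kernel-verified Lean document; each statement's English description precedes it below -/
import Mathlib

section
/- Let w(y|x) = (ν/2) e^{−ν|y−x|} be the Laplace noise channel (ν > 0), and consider block codes of length n satisfying the average absolute value constraint (1/n)∑_{k=1}^n |x_k(m)| ≤ s. Then limsup_{n→∞} sup over all constrained codebooks C and all decoders g of −(1/n) log_b Pr{g(Y) ≠ J} ≤ sup_{ρ ≥ 0} { (1/ln b) min{ νs, ρ ln(λ(νs,ρ)·νs + 1) + 1/λ(νs,ρ) + ln λ(νs,ρ) − 1 } − ρR }, where λ(νs,ρ) = [νs − 1 + √((νs − 1)² + 4(1+ρ)νs)] / (2(1+ρ)νs). -/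
open MeasureTheory Real Filter Set

noncomputable section

/-- The Laplace noise channel transition density `w(y|x) = (ν/2) e^{-ν|y-x|}`. -/
def lapDensity (ν x y : ℝ) : ℝ := (ν / 2) * Real.exp (-(ν * |y - x|))

/-- Density of the length-`n` channel output block `y` given the input block `x`. -/
def blockDensity (ν : ℝ) (n : ℕ) (x y : Fin n → ℝ) : ℝ := ∏ k, lapDensity ν (x k) (y k)

/-- The number of messages `M = ⌊b^(nR)⌋`. -/
def numMsg (b R : ℝ) (n : ℕ) : ℕ := ⌊b ^ ((n : ℝ) * R)⌋₊

/-- A decoder is given by pairwise disjoint open decision regions. -/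
def ValidDecoder (n M : ℕ) (D : Fin M → Set (Fin n → ℝ)) : Prop :=
  (∀ m, IsOpen (D m)) ∧ ∀ m m' : Fin M, m ≠ m' → Disjoint (D m) (D m')

/-- The error probability `Pr{g(Y) ≠ J}` for codebook `x` and decoder regions `D`,
with `J` uniform on the messages. -/
def errProb (ν : ℝ) (n M : ℕ) (x : Fin M → Fin n → ℝ) (D : Fin M → Set (Fin n → ℝ)) : ℝ :=
  (1 / (M : ℝ)) * ∑ m, ∫ y in (D m)ᶜ, blockDensity ν n (x m) y

/-- The set of error exponents `-(1/n) log_b Pr{g(Y) ≠ J}` achievable at block length `n`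
by codebooks satisfying the average absolute value constraint `s` and arbitrary decoders. -/
def expSet (ν s b R : ℝ) (n : ℕ) : Set ℝ :=
  { E | ∃ (x : Fin (numMsg b R n) → Fin n → ℝ) (D : Fin (numMsg b R n) → Set (Fin n → ℝ)),
      (∀ m, (1 / (n : ℝ)) * ∑ k, |x m k| ≤ s) ∧
      ValidDecoder n (numMsg b R n) D ∧
      E = -(1 / (n : ℝ)) * Real.logb b (errProb ν n (numMsg b R n) x D) }

/-- `λ(νs, ρ)` from Theorem 2. -/
def lamFun (νs ρ : ℝ) : ℝ :=
  (νs - 1 + Real.sqrt ((νs - 1) ^ 2 + 4 * (1 + ρ) * νs)) / (2 * (1 + ρ) * νs)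

lemma jointConv {θ τ a b c d : ℝ} (h0 : 0 ≤ θ) (h1 : θ ≤ 1) (hτ : 0 < τ) (ha : 0 < a) (hb : 0 < b)
    (hc : 0 < c) (hd : 0 < d) :
    (θ*a+(1-θ)*b) * ((θ*a+(1-θ)*b)/(θ*c+(1-θ)*d))^τ ≤ θ*(a*(a/c)^τ) + (1-θ)*(b*(b/d)^τ) := by
  have key : ∀ {u w : ℝ}, 0 < u → 0 < w → u * (u/w)^τ = w * (u/w)^(1+τ) := by
    intro u w hu hw
    rw [Real.rpow_add (div_pos hu hw), Real.rpow_one]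
    field_simp
  have hS : 0 < θ*c+(1-θ)*d := by
    rcases h0.eq_or_lt with h | h
    · subst h; simpa using hd
    · have : 0 ≤ (1-θ)*d := mul_nonneg (by linarith) hd.le
      positivity
  have hN : 0 < θ*a+(1-θ)*b := by
    rcases h0.eq_or_lt with h | h
    · subst h; simpa using hb
    · have : 0 ≤ (1-θ)*b := mul_nonneg (by linarith) hb.le
      positivity
  have hcv0 : ConvexOn ℝ (Ici 0) fun x : ℝ => x ^ (1 + τ) := convexOn_rpow (by linarith)
  have hcv := hcv0.2 (show a/c ∈ Ici (0:ℝ) from (div_pos ha hc).le)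
    (show b/d ∈ Ici (0:ℝ) from (div_pos hb hd).le)
    (show 0 ≤ θ*c/(θ*c+(1-θ)*d) by positivity)
    (show 0 ≤ (1-θ)*d/(θ*c+(1-θ)*d) from div_nonneg (mul_nonneg (by linarith) hd.le) hS.le)
    (by field_simp)
  rw [key hN hS, key ha hc, key hb hd]
  simp only [smul_eq_mul] at hcv
  have e : θ * c / (θ * c + (1 - θ) * d) * (a / c) + (1 - θ) * d / (θ * c + (1 - θ) * d) * (b / d)
      = (θ*a+(1-θ)*b)/(θ*c+(1-θ)*d) := by field_simp
  rw [e] at hcv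
  have := mul_le_mul_of_nonneg_left hcv hS.le
  refine this.trans (le_of_eq ?_)
  field_simp

lemma lap_pos {ν : ℝ} (hν : 0 < ν) (x y : ℝ) : 0 < lapDensity ν x y := by
  unfold lapDensity; positivity

lemma lap_integrable {ν : ℝ} (hν : 0 < ν) (x : ℝ) : Integrable (fun y => lapDensity ν x y) := by
  unfold lapDensity
  have h0 : Integrable (fun y : ℝ => Real.exp (-(ν * |y|))) := by
    rw [← integrableOn_univ, ← Set.Iic_union_Ioi (a := (0:ℝ))]
    refine IntegrableOn.union ?_ ?_
    · refine (integrableOn_exp_mul_Iic hν 0).congr_fun ?_ measurableSet_Iic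
      intro y hy
      simp only [abs_of_nonpos (show y ≤ 0 from hy)]; congr 1; ring
    · refine (integrableOn_exp_mul_Ioi (neg_lt_zero.2 hν) 0).congr_fun ?_ measurableSet_Ioi
      intro y hy
      simp only [abs_of_pos (show 0 < y from hy)]; congr 1; ring
  exact (h0.comp_sub_right x).const_mul _

lemma lap_integral {ν : ℝ} (hν : 0 < ν) (x : ℝ) : ∫ y, lapDensity ν x y = 1 := by
  unfold lapDensity
  rw [integral_sub_right_eq_self (fun y => ν/2 * Real.exp (-(ν*|y|))) x]
  rw [integral_const_mul, integral_comp_abs (f := fun t => Real.exp (-(ν*t)))]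
  have : ∫ t in Ioi (0:ℝ), Real.exp (-(ν*t)) = 1/ν := by
    have := integral_exp_mul_Ioi (neg_lt_zero.2 hν) 0
    simp only [neg_mul] at this
    rw [this]; simp
  rw [this]; field_simp

lemma exp_quad {u : ℝ} (h : |u| ≤ 1) : Real.exp u ≤ 1 + u + u^2 := by
  have := (abs_le.1 (Real.abs_exp_sub_one_sub_id_le h)).2
  linarith

/-- pointwise one-shot bound -/
lemma pointwise {w v q A B τ G1 G2 i : ℝ} (hw : 0 < w) (hv : 0 < v) (hq : 0 < q) (hA : 0 < A)
    (hB : 0 < B) (hτ : 0 < τ) (h1 : v * (v/w)^τ ≤ G1) (h2 : v * (v/q)^τ ≤ G2)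
    (hi : i = 0 ∨ i = 1) :
    v - G1 / A^τ - G2/B^τ - B * (q * i) ≤ A * (w * (1-i)) := by
  have e1 : v * (v/(A*w))^τ ≤ G1 / A^τ := by
    rw [show v/(A*w) = (v/w)/A by field_simp, Real.div_rpow (by positivity) hA.le, ← mul_div_assoc]
    gcongr
  have e2 : v * (v/(B*q))^τ ≤ G2 / B^τ := by
    rw [show v/(B*q) = (v/q)/B by field_simp, Real.div_rpow (by positivity) hB.le, ← mul_div_assoc]
    gcongr
  have p1 : 0 ≤ v * (v/(A*w))^τ := by positivity
  have p2 : 0 ≤ v * (v/(B*q))^τ := by positivity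
  have p3 : 0 ≤ B * (q * i) := by rcases hi with rfl | rfl <;> (simp; try positivity)
  have p4 : 0 ≤ A * (w * (1-i)) := by rcases hi with rfl | rfl <;> (simp; try positivity)
  by_cases c1 : v ≤ A*w
  · by_cases c2 : v ≤ B*q
    · rcases hi with rfl | rfl
      · simp at *; linarith
      · simp at *; linarith
    · have : 1 ≤ (v/(B*q))^τ := Real.one_le_rpow (by rw [one_le_div (by positivity)]; linarith) hτ.le
      nlinarith
  · have : 1 ≤ (v/(A*w))^τ := Real.one_le_rpow (by rw [one_le_div (by positivity)]; linarith) hτ.le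
    nlinarith

/-- block bound -/
lemma block_bound {n : ℕ} {τ A B : ℝ} (hτ : 0 < τ) (hA : 0 < A) (hB : 0 < B)
    (w v q G1 G2 : Fin n → ℝ → ℝ)
    (hw : ∀ k y, 0 < w k y) (hv : ∀ k y, 0 < v k y) (hq : ∀ k y, 0 < q k y)
    (h1 : ∀ k y, v k y * (v k y / w k y)^τ ≤ G1 k y)
    (h2 : ∀ k y, v k y * (v k y / q k y)^τ ≤ G2 k y)
    (iw : ∀ k, Integrable (w k)) (iv : ∀ k, Integrable (v k)) (iq : ∀ k, Integrable (q k))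
    (i1 : ∀ k, Integrable (G1 k)) (i2 : ∀ k, Integrable (G2 k))
    (jv : ∀ k, ∫ y, v k y = 1)
    (D : Set (Fin n → ℝ)) (hD : MeasurableSet D) :
    1 - (∏ k, ∫ y, G1 k y) / A^τ - (∏ k, ∫ y, G2 k y) / B^τ - B * ∫ y in D, ∏ k, q k (y k)
      ≤ A * ∫ y in Dᶜ, ∏ k, w k (y k) := by
  have Iw := Integrable.fintype_prod iw
  have Iv := Integrable.fintype_prod iv
  have Iq := Integrable.fintype_prod iq
  have I1 := Integrable.fintype_prod i1
  have I2 := Integrable.fintype_prod i2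
  rw [← volume_pi] at Iw Iv Iq I1 I2
  have pt : ∀ y : Fin n → ℝ, (∏ k, v k (y k)) - (∏ k, G1 k (y k)) / A^τ - (∏ k, G2 k (y k)) / B^τ
      - B * D.indicator (fun y => ∏ k, q k (y k)) y
      ≤ A * Dᶜ.indicator (fun y => ∏ k, w k (y k)) y := by
    intro y
    have Q : ∀ (u G : Fin n → ℝ → ℝ), (∀ k y, 0 < u k y) → 
        (∀ k y, v k y * (v k y / u k y)^τ ≤ G k y) →
        (∏ k, v k (y k)) * ((∏ k, v k (y k)) / (∏ k, u k (y k)))^τ ≤ ∏ k, G k (y k) := by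
      intro u G hu hG
      rw [← Finset.prod_div_distrib, ← Real.finsetProd_rpow _ _ (fun k _ => (div_pos (hv k _) (hu k _)).le),
        ← Finset.prod_mul_distrib]
      exact Finset.prod_le_prod (fun k _ => mul_nonneg (hv k _).le
        (Real.rpow_nonneg (div_pos (hv k _) (hu k _)).le _)) (fun k _ => hG k _)
    have P := fun (i : ℝ) (hi : i = 0 ∨ i = 1) => pointwise (Finset.prod_pos fun k _ => hw k (y k))
      (Finset.prod_pos fun k _ => hv k (y k)) (Finset.prod_pos fun k _ => hq k (y k)) hA hB hτ
      (Q w G1 hw h1) (Q q G2 hq h2) hi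
    by_cases hy : y ∈ D
    · simpa [hy] using P 1 (Or.inr rfl)
    · simpa [hy] using P 0 (Or.inl rfl)
  have IqD := (Iq.indicator hD)
  have IwD := (Iw.indicator hD.compl)
  have := integral_mono (((Iv.sub (I1.div_const _)).sub (I2.div_const _)).sub (IqD.const_mul B))
    (IwD.const_mul A) pt
  have E : ∫ y : Fin n → ℝ, ((∏ k, v k (y k)) - (∏ k, G1 k (y k)) / A^τ - (∏ k, G2 k (y k)) / B^τ
      - B * D.indicator (fun y => ∏ k, q k (y k)) y) =
      (∫ y : Fin n → ℝ, ∏ k, v k (y k)) - (∫ y : Fin n → ℝ, ∏ k, G1 k (y k)) / A^τ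
       - (∫ y : Fin n → ℝ, ∏ k, G2 k (y k)) / B^τ
       - B * ∫ y : Fin n → ℝ, D.indicator (fun y => ∏ k, q k (y k)) y := by
    rw [← integral_div, ← integral_div, ← integral_const_mul]
    have t1 := integral_sub Iv (I1.div_const (A^τ))
    have t2 := integral_sub (Iv.sub (I1.div_const (A^τ))) (I2.div_const (B^τ))
    have t3 := integral_sub ((Iv.sub (I1.div_const (A^τ))).sub (I2.div_const (B^τ)))
      (IqD.const_mul B)
    simp only [Pi.sub_apply] at t1 t2 t3
    rw [t3, t2, t1]
  have this2 := E.symm.le.trans this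
  rw [integral_const_mul, integral_indicator hD, integral_indicator hD.compl,
    integral_fintype_prod_volume_eq_prod, integral_fintype_prod_volume_eq_prod,
    integral_fintype_prod_volume_eq_prod] at this2
  simpa [jv] using this2

lemma ratio_bound {a c x x' t m τ y : ℝ} (ha : 0 < a) (hc : 0 < c) (hτ : 0 < τ)
    (hat : 0 < a - τ*t) (h : c * |y - x'| - a * |y-x| ≤ t * |y-x| + m) :
    lapDensity a x y * (lapDensity a x y / lapDensity c x' y)^τ ≤
      ((a/c)^τ * Real.exp (τ*m) * (a/(a-τ*t))) * lapDensity (a-τ*t) x y := by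
  have e1 : lapDensity a x y / lapDensity c x' y = (a/c) * Real.exp (c*|y-x'| - a*|y-x|) := by
    unfold lapDensity
    rw [Real.exp_sub, Real.exp_neg (c*|y-x'|), Real.exp_neg (a*|y-x|)]
    field_simp
  rw [e1, Real.mul_rpow (by positivity) (Real.exp_pos _).le, ← Real.exp_mul]
  have e2 : Real.exp ((c*|y-x'| - a*|y-x|)*τ) ≤ Real.exp (τ*m) * Real.exp (τ*t*|y-x|) := by
    rw [← Real.exp_add]
    apply Real.exp_le_exp.2
    nlinarith
  have e3 : lapDensity a x y * Real.exp (τ*t*|y-x|) = (a/(a-τ*t)) * lapDensity (a-τ*t) x y := by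
    unfold lapDensity
    rw [show -((a-τ*t)*|y-x|) = -(a*|y-x|) + τ*t*|y-x| by ring, Real.exp_add]
    field_simp
  have p := lap_pos ha x y
  calc _ ≤ lapDensity a x y * ((a/c)^τ * (Real.exp (τ*m) * Real.exp (τ*t*|y-x|))) := by gcongr
    _ = (a/c)^τ * Real.exp (τ*m) * (lapDensity a x y * Real.exp (τ*t*|y-x|)) := by ring
    _ = _ := by rw [e3]; ring

def vden (ν lam θ K x y : ℝ) : ℝ :=
  if |x| ≤ K then θ * lapDensity ν 0 y + (1-θ) * lapDensity (ν*lam) x y else lapDensity ν x y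

def qden (ν β κ θ δ y : ℝ) : ℝ :=
  Real.exp (-δ) * (θ * lapDensity ν 0 y + (1-θ) * lapDensity β 0 y)
    + (1 - Real.exp (-δ)) * lapDensity κ 0 y

lemma mix_pos {θ a b : ℝ} (h0 : 0 ≤ θ) (h1 : θ ≤ 1) (ha : 0 < a) (hb : 0 < b) :
    0 < θ*a+(1-θ)*b := by
  rcases h0.eq_or_lt with h | h
  · subst h; simpa using hb
  · have : 0 ≤ (1-θ)*b := mul_nonneg (by linarith) hb.le
    positivity

lemma mix_int {θ η a b x x' : ℝ} (ha : 0 < a) (hb : 0 < b) :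
    Integrable (fun y => θ * lapDensity a x y + η * lapDensity b x' y) ∧
    ∫ y, (θ * lapDensity a x y + η * lapDensity b x' y) = θ + η := by
  refine ⟨((lap_integrable ha x).const_mul _).add ((lap_integrable hb x').const_mul _), ?_⟩
  rw [integral_add ((lap_integrable ha x).const_mul _) ((lap_integrable hb x').const_mul _),
    integral_const_mul, integral_const_mul, lap_integral ha, lap_integral hb]
  ring

lemma vden_pos {ν lam θ K x y : ℝ} (hν : 0 < ν) (hl : 0 < lam) (h0 : 0 ≤ θ) (h1 : θ ≤ 1) :
    0 < vden ν lam θ K x y := by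
  unfold vden
  split_ifs
  · exact mix_pos h0 h1 (lap_pos hν _ _) (lap_pos (by positivity) _ _)
  · exact lap_pos hν _ _

lemma vden_int {ν lam θ K x : ℝ} (hν : 0 < ν) (hl : 0 < lam) :
    Integrable (fun y => vden ν lam θ K x y) ∧ ∫ y, vden ν lam θ K x y = 1 := by
  unfold vden
  split_ifs
  · have := mix_int (θ := θ) (η := 1-θ) (x := 0) (x' := x) hν (show 0 < ν*lam by positivity)
    refine ⟨this.1, this.2.trans (by ring)⟩
  · exact ⟨lap_integrable hν _, lap_integral hν _⟩

lemma qden_pos {ν β κ θ δ y : ℝ} (hν : 0 < ν) (hβ : 0 < β) (hκ : 0 < κ) (h0 : 0 ≤ θ) (h1 : θ ≤ 1)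
    (hδ : 0 < δ) : 0 < qden ν β κ θ δ y := by
  unfold qden
  have := Real.exp_lt_one_iff.2 (neg_lt_zero.2 hδ)
  exact mix_pos (Real.exp_pos _).le this.le (mix_pos h0 h1 (lap_pos hν _ _) (lap_pos hβ _ _))
    (lap_pos hκ _ _)

lemma qden_int {ν β κ θ δ : ℝ} (hν : 0 < ν) (hβ : 0 < β) (hκ : 0 < κ) :
    Integrable (fun y => qden ν β κ θ δ y) ∧ ∫ y, qden ν β κ θ δ y = 1 := by
  unfold qden
  have := mix_int (θ := θ) (η := 1-θ) (x := 0) (x' := 0) hν hβ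
  refine ⟨(this.1.const_mul _).add ((lap_integrable hκ _).const_mul _), ?_⟩
  rw [integral_add (this.1.const_mul _) ((lap_integrable hκ _).const_mul _), integral_const_mul,
    integral_const_mul, this.2, lap_integral hκ]
  ring

lemma letter1 {ν lam θ K τ δ : ℝ} (hν : 0 < ν) (hl : 0 < lam) (h0 : 0 ≤ θ)
    (h1 : θ ≤ 1) (hτ : 0 < τ) (hδ : 0 < δ)
    (hτd : τ * ((1-lam)/lam) < 1)
    (c1 : ∀ x, |x| ≤ K → Real.exp (τ*(ν*|x|)) ≤ 1 + τ*(ν*|x|) + τ*δ)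
    (c2 : lam^τ / (1 - τ * ((1-lam)/lam)) ≤ 1 + τ * (1/lam + Real.log lam - 1) + τ*δ)
    (x : ℝ) : ∃ G : ℝ → ℝ, Integrable G ∧
      ∫ y, G y ≤ Real.exp (τ*(θ*ν*|x| + (1-θ)*(1/lam + Real.log lam - 1) + δ)) ∧
      ∀ y, vden ν lam θ K x y * (vden ν lam θ K x y / lapDensity ν x y)^τ ≤ G y := by
  have hD : 0 ≤ 1/lam + Real.log lam - 1 := by
    have := Real.one_sub_inv_le_log_of_pos hl
    rw [one_div]; linarith
  have hθ : 0 ≤ 1-θ := by linarith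
  by_cases hx : |x| ≤ K
  · have hpos : 0 < ν*lam - τ*(ν*(1-lam)) := by
      have : ν*lam - τ*(ν*(1-lam)) = ν*lam*(1 - τ*((1-lam)/lam)) := by field_simp
      rw [this]
      have : 0 < 1 - τ*((1-lam)/lam) := by linarith
      positivity
    have M := mix_int (θ := θ*Real.exp (τ*(ν*|x|)))
      (η := (1-θ)*(lam^τ / (1 - τ * ((1-lam)/lam)))) (x := 0) (x' := x) hν hpos
    refine ⟨_, M.1, M.2.le.trans ?_, ?_⟩
    · refine le_trans ?_ (Real.add_one_le_exp _)
      have := mul_le_mul_of_nonneg_left (c1 x hx) h0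
      have := mul_le_mul_of_nonneg_left c2 hθ
      linarith
    · intro y
      simp only [vden, hx, if_true]
      have J := jointConv (c := lapDensity ν x y) (d := lapDensity ν x y) h0 h1 hτ
        (lap_pos hν 0 y) (lap_pos (show 0 < ν*lam by positivity) x y) (lap_pos hν x y)
        (lap_pos hν x y)
      rw [show θ*lapDensity ν x y + (1-θ)*lapDensity ν x y = lapDensity ν x y by ring] at J
      refine J.trans ?_
      have r1 := ratio_bound (a := ν) (c := ν) (x := 0) (x' := x) (t := 0) (m := ν*|x|) (τ := τ)
        (y := y) hν hν hτ (by simpa using hν) (by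
          have := abs_sub y x
          have h3 : |y-x| ≤ |y|+|x| := abs_sub y x
          simp only [sub_zero]
          nlinarith)
      have r2 := ratio_bound (a := ν*lam) (c := ν) (x := x) (x' := x) (t := ν*(1-lam)) (m := 0)
        (τ := τ) (y := y) (by positivity) hν hτ hpos (by apply le_of_eq; ring)
      have s1 : (ν/ν)^τ * Real.exp (τ*(ν*|x|)) * (ν/(ν-τ*0)) = Real.exp (τ*(ν*|x|)) := by
        rw [div_self hν.ne']; simp [hν.ne']
      have s2 : (ν*lam/ν)^τ * Real.exp (τ*0) * (ν*lam/(ν*lam - τ*(ν*(1-lam)))) =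
          lam^τ / (1 - τ * ((1-lam)/lam)) := by
        rw [mul_div_cancel_left₀ _ hν.ne',
          show ν*lam - τ*(ν*(1-lam)) = ν*lam*(1 - τ*((1-lam)/lam)) by field_simp]
        have : 1 - τ*((1-lam)/lam) ≠ 0 := by linarith
        generalize 1 - τ*((1-lam)/lam) = u at *
        simp; field_simp
      rw [s1] at r1
      rw [s2] at r2
      simp only [mul_zero, sub_zero] at r1
      have := mul_le_mul_of_nonneg_left r1 h0
      have := mul_le_mul_of_nonneg_left r2 hθ
      linarith
  · refine ⟨_, lap_integrable hν x, ?_, ?_⟩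
    · rw [lap_integral hν]
      apply Real.one_le_exp
      positivity
    · intro y
      simp only [vden, hx, if_false]
      rw [div_self (lap_pos hν x y).ne']; simp

lemma letter2 {ν lam θ K τ δ κ s g β : ℝ} (hν : 0 < ν) (hl : 0 < lam) (h0 : 0 ≤ θ)
    (h1 : θ ≤ 1) (hτ : 0 < τ) (hδ : 0 < δ) (hs : 0 < s) (hg : g = 1 + lam*(ν*s))
    (hβ : β = ν*lam/g) (hκ : 0 < κ) (hκν : κ ≤ ν)
    (hK : ∀ x, K < |x| → Real.log (ν/(κ*(1-Real.exp (-δ)))) ≤ κ*|x|)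
    (c1 : ∀ x, |x| ≤ K → Real.exp (τ*(Real.log g + β*|x|)) / (1+τ*(1-1/g)) ≤ 
      1 + τ*(Real.log g + β*|x| - (1-1/g)) + τ*δ)
    (x : ℝ) : ∃ G : ℝ → ℝ, Integrable G ∧
      ∫ y, G y ≤ Real.exp (τ*((1-θ)*(Real.log g + β*|x| - (1-1/g)) + 2*δ + 2*κ*|x|)) ∧
      ∀ y, vden ν lam θ K x y * (vden ν lam θ K x y / qden ν β κ θ δ y)^τ ≤ G y := by
  have hθ : 0 ≤ 1-θ := by linarith
  have hg1 : 1 < g := by rw [hg]; have : 0 < lam*(ν*s) := by positivity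
                         linarith
  have hg0 : 0 < g := by linarith
  have hβ0 : 0 < β := by rw [hβ]; positivity
  have hε : 0 < 1 - Real.exp (-δ) := by
    have := Real.exp_lt_one_iff.2 (neg_lt_zero.2 hδ); linarith
  have hc : 0 ≤ 1 - 1/g := by
    have : 1/g ≤ 1 := by rw [div_le_one hg0]; exact hg1.le
    linarith
  have hlg : 0 ≤ Real.log g - (1-1/g) := by
    have := Real.one_sub_inv_le_log_of_pos hg0
    rw [one_div]; linarith
  by_cases hx : |x| ≤ K
  · have hpos : 0 < ν*lam - τ*(β-ν*lam) := by
      have : ν*lam - τ*(β-ν*lam) = ν*lam*(1+τ*(1-1/g)) := by rw [hβ]; field_simp; ring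
      rw [this]; positivity
    have M := mix_int (θ := θ)
      (η := (1-θ)*(Real.exp (τ*(Real.log g + β*|x|)) / (1+τ*(1-1/g)))) (x := 0) (x' := x) hν hpos
    refine ⟨_, M.1.const_mul (Real.exp (τ*δ)), ?_, ?_⟩
    · rw [integral_const_mul, M.2]
      rw [show τ*((1-θ)*(Real.log g + β*|x| - (1-1/g)) + 2*δ + 2*κ*|x|) = τ*δ + 
        τ*((1-θ)*(Real.log g + β*|x| - (1-1/g)) + δ + 2*κ*|x|) by ring, Real.exp_add]
      refine mul_le_mul_of_nonneg_left ?_ (Real.exp_pos _).le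
      refine le_trans ?_ (Real.add_one_le_exp _)
      have := mul_le_mul_of_nonneg_left (c1 x hx) hθ
      have : 0 ≤ τ*(2*κ*|x|) := by positivity
      have : 0 ≤ θ*(τ*δ) := by positivity
      linarith
    · intro y
      simp only [vden, hx, if_true]
      have vp : 0 < θ * lapDensity ν 0 y + (1-θ) * lapDensity (ν*lam) x y := 
        mix_pos h0 h1 (lap_pos hν 0 y) (lap_pos (show 0 < ν*lam by positivity) x y)
      have qp : 0 < θ * lapDensity ν 0 y + (1-θ) * lapDensity β 0 y := 
        mix_pos h0 h1 (lap_pos hν 0 y) (lap_pos hβ0 0 y)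
      have J := jointConv (c := lapDensity ν 0 y) (d := lapDensity β 0 y) h0 h1 hτ
        (lap_pos hν 0 y) (lap_pos (show 0 < ν*lam by positivity) x y) (lap_pos hν 0 y)
        (lap_pos hβ0 0 y)
      have r2 := ratio_bound (a := ν*lam) (c := β) (x := x) (x' := 0) (t := β-ν*lam) (m := β*|x|)
        (τ := τ) (y := y) (by positivity) hβ0 hτ hpos (by
          have h3 : |y| ≤ |y-x|+|x| := by simpa using abs_add_le (y-x) x
          simp only [sub_zero]
          nlinarith)
      have s2 : (ν*lam/β)^τ * Real.exp (τ*(β*|x|)) * (ν*lam/(ν*lam - τ*(β-ν*lam))) =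
          Real.exp (τ*(Real.log g + β*|x|)) / (1+τ*(1-1/g)) := by
        rw [show ν*lam - τ*(β-ν*lam) = ν*lam*(1+τ*(1-1/g)) by rw [hβ]; field_simp; ring,
          show ν*lam/β = g by rw [hβ]; field_simp, Real.rpow_def_of_pos hg0, ← Real.exp_add]
        have : 1+τ*(1-1/g) ≠ 0 := by positivity
        generalize 1+τ*(1-1/g) = u at *
        rw [show Real.log g * τ + τ*(β*|x|) = τ*(Real.log g + β*|x|) by ring]
        field_simp
      rw [s2] at r2
      rw [div_self (lap_pos hν 0 y).ne', Real.one_rpow, mul_one] at J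
      have hq : Real.exp (-δ) * (θ * lapDensity ν 0 y + (1-θ) * lapDensity β 0 y) ≤ 
          qden ν β κ θ δ y := by
        unfold qden
        have := mul_pos hε (lap_pos hκ 0 y)
        linarith
      set V := θ * lapDensity ν 0 y + (1-θ) * lapDensity (ν*lam) x y
      set Q := θ * lapDensity ν 0 y + (1-θ) * lapDensity β 0 y
      have qp0 := qden_pos (y := y) hν hβ0 hκ h0 h1 hδ
      calc V * (V / qden ν β κ θ δ y)^τ ≤ V * (V / (Real.exp (-δ) * Q))^τ := by gcongr
        _ = Real.exp (τ*δ) * (V * (V/Q)^τ) := by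
          rw [show V / (Real.exp (-δ) * Q) = Real.exp δ * (V/Q) by rw [Real.exp_neg]; field_simp,
            Real.mul_rpow (Real.exp_pos _).le (by positivity), ← Real.exp_mul]
          ring_nf
        _ ≤ _ := by
          refine mul_le_mul_of_nonneg_left (J.trans ?_) (Real.exp_pos _).le
          have := mul_le_mul_of_nonneg_left r2 hθ
          linarith
  · refine ⟨_, (lap_integrable hν x).const_mul (Real.exp (τ*(2*κ*|x|))), ?_, ?_⟩
    · rw [integral_const_mul, lap_integral hν, mul_one]
      apply Real.exp_le_exp.2
      have h5 : 0 ≤ (1-θ)*(Real.log g + β*|x| - (1-1/g)) := by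
        apply mul_nonneg hθ
        have : 0 ≤ β*|x| := by positivity
        linarith
      apply mul_le_mul_of_nonneg_left _ hτ.le
      linarith
    · intro y
      simp only [vden, hx, if_false]
      have r := ratio_bound (a := ν) (c := κ) (x := x) (x' := 0) (t := 0) (m := κ*|x|) (τ := τ)
        (y := y) hν hκ hτ (by simpa using hν) (by
          have h3 : |y| ≤ |y-x|+|x| := by simpa using abs_add_le (y-x) x
          have := abs_nonneg (y-x)
          simp only [sub_zero]
          nlinarith)
      simp only [mul_zero, sub_zero, div_self hν.ne', mul_one] at r
      have hq : (1-Real.exp (-δ)) * lapDensity κ 0 y ≤ qden ν β κ θ δ y := by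
        unfold qden
        have := mul_pos (Real.exp_pos (-δ)) (mix_pos h0 h1 (lap_pos hν 0 y) (lap_pos hβ0 0 y))
        linarith
      have w0 := lap_pos hν x y
      have k0 := lap_pos hκ 0 y
      set W := lapDensity ν x y
      set Q := lapDensity κ 0 y
      set e := 1 - Real.exp (-δ)
      have hlog := hK x (not_le.1 hx)
      have qp0 := qden_pos (y := y) hν hβ0 hκ h0 h1 hδ
      calc W * (W / qden ν β κ θ δ y)^τ ≤ W * (W / (e * Q))^τ := by gcongr
        _ = (1/e)^τ * (W * (W/Q)^τ) := by
          rw [show W / (e * Q) = (1/e) * (W/Q) by field_simp,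
            Real.mul_rpow (by positivity) (by positivity)]
          ring
        _ ≤ (1/e)^τ * ((ν/κ)^τ * Real.exp (τ*(κ*|x|)) * W) := by gcongr
        _ = (ν/(κ*e))^τ * Real.exp (τ*(κ*|x|)) * W := by
          rw [show ν/(κ*e) = (1/e) * (ν/κ) by field_simp,
            Real.mul_rpow (by positivity) (by positivity)]
          ring
        _ ≤ _ := by
          refine mul_le_mul_of_nonneg_right ?_ w0.le
          rw [Real.rpow_def_of_pos (by positivity), ← Real.exp_add]
          apply Real.exp_le_exp.2
          nlinarith

lemma exists_tau {U d l δ : ℝ} (hU : 0 ≤ U) (hd : 0 ≤ d) (hδ : 0 < δ) (hD : 0 ≤ d + l) :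
    ∃ τ : ℝ, 0 < τ ∧ τ * d < 1 ∧ (∀ u, 0 ≤ u → u ≤ U → Real.exp (τ*u) ≤ 1 + τ*u + τ*δ) ∧
      Real.exp (τ*l) / (1 - τ*d) ≤ 1 + τ*(d+l) + τ*δ := by
  set P := 1 + U + U^2 + d + |l| + l^2 + d*(d+l+δ) with hP
  have hP0 : 0 < P := by positivity
  have hm : 0 < min 1 δ := lt_min one_pos hδ
  have hl2 := sq_nonneg l
  have hU2 := sq_nonneg U
  have hal := abs_nonneg l
  have hdd : 0 ≤ d*(d+l+δ) := by positivity
  refine ⟨min 1 δ / (2*P), by positivity, ?_⟩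
  set τ := min 1 δ / (2*P) with hτ
  have hτ0 : 0 < τ := by positivity
  have e : τ * P = min 1 δ / 2 := by rw [hτ]; field_simp
  have e1 : τ * P ≤ 1/2 := by rw [e]; linarith [min_le_left 1 δ]
  have e2 : τ * P ≤ δ := by rw [e]; linarith [min_le_right 1 δ]
  have le : ∀ z, z ≤ P → τ*z ≤ 1/2 ∧ τ*z ≤ δ := fun z hz => by
    have := mul_le_mul_of_nonneg_left hz hτ0.le
    constructor <;> linarith
  have hd1 := (le d (by linarith)).1
  refine ⟨by linarith, ?_, ?_⟩
  · intro u hu huU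
    have h1 := (le u (by linarith)).1
    have h2 := (le (u^2) (by nlinarith)).2
    have h3 : 0 ≤ τ*u := by positivity
    have := exp_quad (u := τ*u) (by rw [abs_of_nonneg h3]; linarith)
    nlinarith
  · have h1 := (le |l| (by linarith)).1
    have h2 := (le (l^2 + d*(d+l+δ)) (by linarith)).2
    have := exp_quad (u := τ*l) (by rw [abs_mul, abs_of_pos hτ0]; linarith)
    rw [div_le_iff₀ (by linarith)]
    nlinarith

lemma converse {ν s r θ lam : ℝ} (hν : 0 < ν) (hs : 0 < s) (h0 : 0 ≤ θ) (h1 : θ ≤ 1)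
    (hl : 0 < lam) (hl1 : lam ≤ 1) (hr : (1-θ) * Real.log (1 + lam*(ν*s)) < r)
    {δ' : ℝ} (hδ' : 0 < δ') :
    ∀ᶠ n : ℕ in atTop, ∀ (M : ℕ), Real.exp (n*r) ≤ 2*M →
      ∀ (x : Fin M → Fin n → ℝ) (D : Fin M → Set (Fin n → ℝ)),
      (∀ m, (1 / (n : ℝ)) * ∑ k, |x m k| ≤ s) → ValidDecoder n M D →
      Real.exp (-(n*(θ*(ν*s) + (1-θ)*(1/lam + Real.log lam - 1) + δ'))) / 2 ≤ errProb ν n M x D := by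
  obtain ⟨δ, hδ, hδ1, hδ2⟩ : ∃ δ : ℝ, 0 < δ ∧ 2*δ ≤ δ' ∧
      (1-θ) * Real.log (1 + lam*(ν*s)) + 8*δ ≤ r := by
    refine ⟨min (δ'/2) ((r - (1-θ) * Real.log (1 + lam*(ν*s)))/8), lt_min (by linarith) (by linarith),
      ?_, ?_⟩
    · linarith [min_le_left (δ'/2) ((r - (1-θ) * Real.log (1 + lam*(ν*s)))/8)]
    · linarith [min_le_right (δ'/2) ((r - (1-θ) * Real.log (1 + lam*(ν*s)))/8)]
  have hθ : 0 ≤ 1-θ := by linarith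
  set g := 1 + lam*(ν*s) with hg
  have hg1 : 1 < g := by have : 0 < lam*(ν*s) := by positivity
                         linarith
  have hg0 : 0 < g := by linarith
  set β := ν*lam/g with hβ
  have hβ0 : 0 < β := by positivity
  have hlogg := Real.log_pos hg1
  have hβs : β*s = 1 - 1/g := by rw [hβ, eq_sub_iff_add_eq, hg]; field_simp; ring
  have hc : 0 ≤ 1 - 1/g := by rw [← hβs]; positivity
  have hlg : 0 ≤ Real.log g - (1-1/g) := by
    have := Real.one_sub_inv_le_log_of_pos hg0
    rw [one_div]; linarith
  obtain ⟨κ, hκ, hκν, hκs⟩ : ∃ κ : ℝ, 0 < κ ∧ κ ≤ ν ∧ 2*κ*s ≤ δ := by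
    refine ⟨min ν (δ/(2*s)), lt_min hν (by positivity), min_le_left _ _, ?_⟩
    calc 2 * min ν (δ/(2*s)) * s ≤ 2 * (δ/(2*s)) * s := by gcongr; exact min_le_right _ _
      _ = δ := by field_simp
  set K := max 0 (Real.log (ν/(κ*(1-Real.exp (-δ))))/κ) with hKd
  have hK0 : 0 ≤ K := le_max_left _ _
  have hK : ∀ x, K < |x| → Real.log (ν/(κ*(1-Real.exp (-δ)))) ≤ κ*|x| := by
    intro x hx
    have : Real.log (ν/(κ*(1-Real.exp (-δ))))/κ ≤ |x| := (le_max_right _ _).trans hx.le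
    rw [div_le_iff₀ hκ] at this
    linarith
  have hdl : (1-lam)/lam + Real.log lam = 1/lam + Real.log lam - 1 := by field_simp; ring
  have hD : 0 ≤ 1/lam + Real.log lam - 1 := by
    have := Real.one_sub_inv_le_log_of_pos hl
    rw [one_div]; linarith
  obtain ⟨τ, hτ, t1, t2, t3⟩ := exists_tau (U := ν*K + Real.log g + β*K) (d := (1-lam)/lam)
    (l := Real.log lam) (by positivity) (div_nonneg (by linarith) hl.le) hδ (by rw [hdl]; exact hD)
  have hβK : 0 ≤ β*K := by positivity
  have hνK : 0 ≤ ν*K := by positivity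
  have c1 : ∀ x, |x| ≤ K → Real.exp (τ*(ν*|x|)) ≤ 1 + τ*(ν*|x|) + τ*δ := by
    intro x hx
    have := mul_le_mul_of_nonneg_left hx hν.le
    exact t2 _ (by positivity) (by linarith)
  have c2 : lam^τ / (1 - τ * ((1-lam)/lam)) ≤ 1 + τ * (1/lam + Real.log lam - 1) + τ*δ := by
    rw [Real.rpow_def_of_pos hl, mul_comm _ τ, ← hdl]; exact t3
  have c3 : ∀ x, |x| ≤ K → Real.exp (τ*(Real.log g + β*|x|)) / (1+τ*(1-1/g)) ≤ 
      1 + τ*(Real.log g + β*|x| - (1-1/g)) + τ*δ := by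
    intro x hx
    have a1 := mul_le_mul_of_nonneg_left hx hβ0.le
    have a2 : 0 ≤ β*|x| := by positivity
    have := t2 (Real.log g + β*|x|) (by positivity) (by linarith)
    rw [div_le_iff₀ (by positivity)]
    generalize 1 - 1/g = c at *
    have a3 : 0 ≤ τ*(Real.log g + β*|x| - c)*(τ*c) :=
      mul_nonneg (mul_nonneg hτ.le (by linarith)) (by positivity)
    have a4 : 0 ≤ τ*δ*(τ*c) := by positivity
    nlinarith
  choose G1 iG1 jG1 bG1 using letter1 (K := K) hν hl h0 h1 hτ hδ t1 c1 c2
  choose G2 iG2 jG2 bG2 using letter2 (K := K) hν hl h0 h1 hτ hδ hs hg hβ hκ hκν hK c3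
  have lim : Tendsto (fun n : ℕ => 2*Real.exp (-(n*(τ*δ))) + 2*Real.exp (-(n*(4*δ)))) atTop (nhds 0) := by
    have : ∀ a : ℝ, 0 < a → Tendsto (fun n : ℕ => 2*Real.exp (-(n*a))) atTop (nhds 0) := by
      intro a ha
      have h := (Real.tendsto_exp_neg_atTop_nhds_zero.comp
        ((tendsto_natCast_atTop_atTop (R := ℝ)).atTop_mul_const ha)).const_mul 2
      simpa using h
    simpa using (this _ (show 0 < τ*δ by positivity)).add (this _ (show 0 < 4*δ by positivity))
  filter_upwards [lim.eventually (gt_mem_nhds (show (0:ℝ) < 1/2 by norm_num)), eventually_gt_atTop 0]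
    with n hn hn0 M hM x D hx hDv
  have hn0' : (0:ℝ) < n := by exact_mod_cast hn0
  have hM0 : (0:ℝ) < M := by
    have := Real.exp_pos (n*r); linarith
  set Dl := 1/lam + Real.log lam - 1
  set A := Real.exp (n*(θ*(ν*s) + (1-θ)*Dl + 2*δ)) with hA
  set B := Real.exp (n*((1-θ)*Real.log g + 4*δ)) with hB
  have hxs : ∀ m, ∑ k, |x m k| ≤ n*s := by
    intro m
    have := hx m
    rw [one_div, inv_mul_le_iff₀ hn0'] at this
    exact this
  set T := Real.exp (-(n*(τ*δ))) with hT
  have main : ∀ m, 1 - 2*T - B * ∫ y in D m, ∏ k, qden ν β κ θ δ (y k) ≤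
      A * ∫ y in (D m)ᶜ, blockDensity ν n (x m) y := by
    intro m
    have bb := block_bound (τ := τ) (A := A) (B := B) hτ (Real.exp_pos _) (Real.exp_pos _)
      (fun k y => lapDensity ν (x m k) y) (fun k y => vden ν lam θ K (x m k) y)
      (fun _ y => qden ν β κ θ δ y) (fun k y => G1 (x m k) y) (fun k y => G2 (x m k) y)
      (fun k y => lap_pos hν _ _) (fun k y => vden_pos hν hl h0 h1)
      (fun k y => qden_pos hν hβ0 hκ h0 h1 hδ) (fun k y => bG1 _ _) (fun k y => bG2 _ _)
      (fun k => lap_integrable hν _) (fun k => (vden_int hν hl).1) (fun k => (qden_int hν hβ0 hκ).1)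
      (fun k => iG1 _) (fun k => iG2 _) (fun k => (vden_int hν hl).2) (D m) (hDv.1 m).measurableSet
    have gen : ∀ (G : ℝ → ℝ → ℝ) (a : ℝ → ℝ) (C : ℝ), 
        (∀ x, 0 ≤ ∫ y, G x y) → (∀ x, ∫ y, G x y ≤ Real.exp (τ * a x)) →
        (∑ k, a (x m k) ≤ n*(C - δ)) →
        (∏ k, ∫ y, G (x m k) y) / (Real.exp (n*C))^τ ≤ T := by
      intro G a C hp hG ha
      rw [div_le_iff₀ (by positivity)]
      calc ∏ k, ∫ y, G (x m k) y ≤ ∏ k, Real.exp (τ * a (x m k)) :=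
            Finset.prod_le_prod (fun k _ => hp _) (fun k _ => hG _)
        _ = Real.exp (τ * ∑ k, a (x m k)) := by rw [← Real.exp_sum, Finset.mul_sum]
        _ ≤ Real.exp (τ * (n*(C - δ))) := by gcongr
        _ = _ := by rw [hT, ← Real.exp_mul, ← Real.exp_add]; ring_nf
    have g1 := gen G1 (fun x => θ*ν*|x| + (1-θ)*Dl + δ) (θ*(ν*s) + (1-θ)*Dl + 2*δ)
      (fun x => integral_nonneg fun y => le_trans (mul_nonneg (vden_pos hν hl h0 h1).le
        (Real.rpow_nonneg (div_pos (vden_pos hν hl h0 h1) (lap_pos hν _ _)).le _)) (bG1 x y)) jG1 (by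
        rw [Finset.sum_add_distrib, Finset.sum_add_distrib, ← Finset.mul_sum]
        simp only [Finset.sum_const, Finset.card_univ, Fintype.card_fin, nsmul_eq_mul]
        have := mul_le_mul_of_nonneg_left (hxs m) (show 0 ≤ θ*ν by positivity)
        linarith)
    have g2 := gen G2 (fun x => (1-θ)*(Real.log g + β*|x| - (1-1/g)) + 2*δ + 2*κ*|x|)
      ((1-θ)*Real.log g + 4*δ)
      (fun x => integral_nonneg fun y => le_trans (mul_nonneg (vden_pos hν hl h0 h1).le
        (Real.rpow_nonneg (div_pos (vden_pos hν hl h0 h1) (qden_pos hν hβ0 hκ h0 h1 hδ)).le _))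
        (bG2 x y)) jG2 (by
        have e : ∀ k, (1-θ)*(Real.log g + β*|x m k| - (1-1/g)) + 2*δ + 2*κ*|x m k| =
          ((1-θ)*(Real.log g - (1-1/g)) + 2*δ) + ((1-θ)*β+2*κ)*|x m k| := fun k => by ring
        simp only [e]
        rw [Finset.sum_add_distrib, ← Finset.mul_sum]
        simp only [Finset.sum_const, Finset.card_univ, Fintype.card_fin, nsmul_eq_mul]
        have a1 := mul_le_mul_of_nonneg_left (hxs m) (show 0 ≤ (1-θ)*β+2*κ by positivity)
        have a2 : ((1-θ)*β+2*κ)*(n*s) = n*((1-θ)*(1-1/g) + 2*κ*s) := by rw [← hβs]; ring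
        have a3 := mul_le_mul_of_nonneg_left hκs hn0'.le
        nlinarith)
    unfold blockDensity
    linarith
  have hq : ∑ m, ∫ y in D m, ∏ k, qden ν β κ θ δ (y k) ≤ 1 := by
    have Iq : Integrable (fun y : Fin n → ℝ => ∏ k, qden ν β κ θ δ (y k)) := by
      have := Integrable.fintype_prod (fun _ : Fin n => (qden_int (θ := θ) (δ := δ) hν hβ0 hκ).1)
      rwa [← volume_pi] at this
    rw [← integral_iUnion_fintype (fun m => (hDv.1 m).measurableSet)
      (fun m m' h => hDv.2 m m' h) (fun m => Iq.integrableOn)]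
    refine (setIntegral_le_integral Iq (ae_of_all _ fun y => Finset.prod_nonneg fun k _ =>
      (qden_pos hν hβ0 hκ h0 h1 hδ).le)).trans ?_
    rw [integral_fintype_prod_volume_eq_prod (fun _ : Fin n => fun y => qden ν β κ θ δ y)]
    simp [(qden_int (θ := θ) (δ := δ) hν hβ0 hκ).2]
  have hsum := Finset.sum_le_sum (fun m (_ : m ∈ Finset.univ) => main m)
  rw [Finset.sum_sub_distrib, ← Finset.mul_sum, ← Finset.mul_sum] at hsum
  simp only [Finset.sum_const, Finset.card_univ, Fintype.card_fin, nsmul_eq_mul] at hsum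
  have hB0 : 0 < B := Real.exp_pos _
  have hBM : B ≤ M * (2*Real.exp (-(n*(4*δ)))) := by
    have e1 : B ≤ Real.exp (n*r) * Real.exp (-(n*(4*δ))) := by
      rw [hB, ← Real.exp_add]
      apply Real.exp_le_exp.2
      have := mul_le_mul_of_nonneg_left hδ2 hn0'.le
      linarith
    have := mul_le_mul_of_nonneg_right hM (Real.exp_pos (-(n*(4*δ)))).le
    linarith
  have hS : (M:ℝ) * (1/2) ≤ A * ∑ m, ∫ y in (D m)ᶜ, blockDensity ν n (x m) y := by
    have := mul_le_mul_of_nonneg_left hq hB0.le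
    have := mul_le_mul_of_nonneg_left hn.le hM0.le
    linarith
  have hAinv : Real.exp (-(n*(θ*(ν*s) + (1-θ)*Dl + δ'))) ≤ A⁻¹ := by
    rw [hA, ← Real.exp_neg]
    apply Real.exp_le_exp.2
    have := mul_le_mul_of_nonneg_left hδ1 hn0'.le
    linarith
  have hA0 : 0 < A := Real.exp_pos _
  unfold errProb
  refine (div_le_div_of_nonneg_right hAinv (by norm_num : (0:ℝ) ≤ 2)).trans ?_
  rw [one_div, le_inv_mul_iff₀ hM0, show (M:ℝ) * (A⁻¹/2) = (M*(1/2)) / A by field_simp,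
    div_le_iff₀ hA0]
  linarith

lemma lamFun_eq {a lam : ℝ} (ha : 0 < a) (hl : 0 < lam) (hl1 : lam ≤ 1) :
    lamFun a ((1-lam)*(1+a*lam)/(a*lam^2)) = lam := by
  have e : 1 + (1-lam)*(1+a*lam)/(a*lam^2) = (1-lam+a*lam)/(a*lam^2) := by field_simp; ring
  have hp : 0 < 1 - lam + a*lam := by have : 0 < a*lam := by positivity
                                      linarith
  unfold lamFun
  rw [e]
  have e2 : (a-1)^2 + 4*((1-lam+a*lam)/(a*lam^2))*a = ((2+(a-1)*lam)/lam)^2 := by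
    field_simp; ring
  rw [e2, Real.sqrt_sq (div_nonneg (by nlinarith) hl.le)]
  field_simp
  ring

lemma optim {a r T : ℝ} (ha : 0 < a) (hr : 0 < r)
    (hT : ∀ lam : ℝ, 0 < lam → lam ≤ 1 →
      min a ((1-lam)*(1+a*lam)/(a*lam^2) * Real.log (lam*a+1) + 1/lam + Real.log lam - 1)
        - (1-lam)*(1+a*lam)/(a*lam^2) * r ≤ T) :
    ∃ θ lam : ℝ, 0 ≤ θ ∧ θ ≤ 1 ∧ 0 < lam ∧ lam ≤ 1 ∧ (1-θ)*Real.log (1+lam*a) ≤ r ∧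
      θ*a + (1-θ)*(1/lam + Real.log lam - 1) ≤ T := by
  have T0 : 0 ≤ T := by
    have := hT 1 one_pos le_rfl
    simpa [ha.le] using this
  by_cases h : Real.log (1+a) ≤ r
  · refine ⟨0, 1, le_rfl, zero_le_one, one_pos, le_rfl, ?_, ?_⟩
    · simpa using h
    · simpa using T0
  push Not at h
  set l0 := (Real.exp r - 1)/a with hl0
  have hl0p : 0 < l0 := by
    have := Real.add_one_le_exp r
    apply div_pos _ ha; linarith
  have hl01 : l0 ≤ 1 := by
    rw [hl0, div_le_one ha]
    have := (Real.lt_log_iff_exp_lt (by linarith)).1 h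
    linarith
  have hlog : Real.log (1 + l0*a) = r := by
    rw [hl0, div_mul_cancel₀ _ ha.ne']; simp
  set φ : ℝ → ℝ := fun lam =>
    (1-lam)*(1+a*lam)/(a*lam^2) * Real.log (lam*a+1) + 1/lam + Real.log lam - 1 with hφ
  by_cases hc : φ l0 ≤ a
  · refine ⟨0, l0, le_rfl, zero_le_one, hl0p, hl01, by simp [hlog], ?_⟩
    have := hT l0 hl0p hl01
    rw [min_eq_right hc] at this
    simp only [hφ] at this
    rw [show l0*a+1 = 1+l0*a by ring, hlog] at this
    linarith
  push Not at hc
  have hcont : ContinuousOn φ (Icc l0 1) := by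
    have hp : ∀ x ∈ Icc l0 1, x ≠ 0 := fun x hx => (hl0p.trans_le hx.1).ne'
    apply ContinuousOn.sub _ continuousOn_const
    refine ContinuousOn.add (ContinuousOn.add (ContinuousOn.mul ?_ ?_) ?_) ?_
    · refine ContinuousOn.div (by fun_prop) (by fun_prop) ?_
      intro x hx
      have := hp x hx
      positivity
    · refine ContinuousOn.log (by fun_prop) ?_
      intro x hx
      have := hl0p.trans_le hx.1
      positivity
    · exact ContinuousOn.div (by fun_prop) (by fun_prop) hp
    · exact ContinuousOn.log (by fun_prop) hp
  obtain ⟨l, hl, hla⟩ := intermediate_value_Icc' hl01 hcont (show a ∈ Icc (φ 1) (φ l0) from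
    ⟨by simp [hφ, ha.le], hc.le⟩)
  have hlp := hl0p.trans_le hl.1
  have hI : r ≤ Real.log (1+l*a) := by
    rw [← hlog]
    apply Real.log_le_log (by positivity)
    have := mul_le_mul_of_nonneg_right hl.1 ha.le
    linarith
  have hI0 : 0 < Real.log (1+l*a) := hr.trans_le hI
  have hTl := hT l hlp hl.2
  simp only [hφ] at hla
  rw [hla, min_self] at hTl
  rw [show l*a+1 = 1+l*a by ring] at hla
  have hθ : r / Real.log (1+l*a) ≤ 1 := (div_le_one hI0).2 hI
  have hθ0 : 0 < r / Real.log (1+l*a) := by positivity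
  have hm : r / Real.log (1+l*a) * Real.log (1+l*a) = r := by field_simp
  refine ⟨1 - r / Real.log (1+l*a), l, by linarith, by linarith, hlp, hl.2, ?_, ?_⟩
  · rw [sub_sub_cancel, hm]
  · rw [sub_sub_cancel]
    generalize (1-l)*(1+a*l)/(a*l^2) = ρ at *
    generalize Real.log (1+l*a) = I at *
    generalize r/I = p at *
    have e : 1/l + Real.log l - 1 = a - ρ*I := by linarith
    rw [e]
    have : p*(a-ρ*I) = p*a - ρ*(p*I) := by ring
    rw [this, hm]; linarith

lemma zero_mem_expSet {ν s b R : ℝ} (hν : 0 < ν) (hs : 0 < s) (hb : 1 < b) (hR : 0 < R) (n : ℕ) :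
    0 ∈ expSet ν s b R n := by
  refine ⟨fun _ _ => 0, fun _ => ∅, fun m => by simpa using hs.le, ⟨fun _ => isOpen_empty, by simp⟩, ?_⟩
  have hM : (numMsg b R n : ℝ) ≠ 0 := by
    have : 1 ≤ numMsg b R n := by
      unfold numMsg
      rw [Nat.one_le_floor_iff]
      exact Real.one_le_rpow hb.le (by positivity)
    positivity
  have : errProb ν n (numMsg b R n) (fun _ _ => 0) (fun _ => ∅) = 1 := by
    unfold errProb blockDensity
    simp only [compl_empty, setIntegral_univ]
    rw [integral_fintype_prod_volume_eq_prod (fun _ : Fin n => fun y => lapDensity ν 0 y)]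
    simp [lap_integral hν, hM]
  rw [this]; simp

/-- Theorem 2 (case q = 1, r = 1): asymptotic upper bound on the error exponent of the
Laplace noise channel with the average absolute value constraint. -/
theorem laplace_abs_error_exponent_bound
    (ν s b R : ℝ) (hν : 0 < ν) (hs : 0 < s) (hb : 1 < b) (hR : 0 < R) :
    Filter.limsup (fun n : ℕ => sSup (expSet ν s b R n)) Filter.atTop ≤
      sSup { v : ℝ | ∃ ρ : ℝ, 0 ≤ ρ ∧
        v = (1 / Real.log b) *
              min (ν * s)
                (ρ * Real.log (lamFun (ν * s) ρ * (ν * s) + 1) + 1 / lamFun (ν * s) ρ +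
                  Real.log (lamFun (ν * s) ρ) - 1) -
            ρ * R } := by
  have hL : 0 < Real.log b := Real.log_pos hb
  set S := { v : ℝ | ∃ ρ : ℝ, 0 ≤ ρ ∧
        v = (1 / Real.log b) *
              min (ν * s)
                (ρ * Real.log (lamFun (ν * s) ρ * (ν * s) + 1) + 1 / lamFun (ν * s) ρ +
                  Real.log (lamFun (ν * s) ρ) - 1) -
            ρ * R } with hS
  have ha : 0 < ν*s := by positivity
  have hbdd : BddAbove S := by
    refine ⟨1 / Real.log b * (ν*s), ?_⟩
    rintro v ⟨ρ, hρ, rfl⟩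
    have h1 : ∀ z, 1 / Real.log b * min (ν*s) z ≤ 1 / Real.log b * (ν*s) := fun z =>
      mul_le_mul_of_nonneg_left (min_le_left _ _) (by positivity)
    have h2 : 0 ≤ ρ*R := by positivity
    linarith [h1 (ρ * Real.log (lamFun (ν * s) ρ * (ν * s) + 1) + 1 / lamFun (ν * s) ρ +
                  Real.log (lamFun (ν * s) ρ) - 1)]
  obtain ⟨θ, lam, h0, h1, hl, hl1, hI, hTl⟩ := optim (a := ν*s) (r := R*Real.log b)
    (T := Real.log b * sSup S) ha (by positivity) (by
      intro lam hl hl1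
      have hρ : 0 ≤ (1-lam)*(1+ν*s*lam)/(ν*s*lam^2) := by
        have : 0 ≤ 1 - lam := by linarith
        positivity
      have := le_csSup hbdd (show _ ∈ S from ⟨_, hρ, rfl⟩)
      rw [lamFun_eq ha hl hl1] at this
      have := mul_le_mul_of_nonneg_left this hL.le
      refine le_trans (le_of_eq ?_) this
      generalize min (ν*s) _ = mm
      field_simp)
  set Dl := 1/lam + Real.log lam - 1 with hDl
  have hD : 0 ≤ Dl := by
    have := Real.one_sub_inv_le_log_of_pos hl
    rw [hDl, one_div]; linarith
  apply le_of_forall_pos_le_add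
  intro ε hε
  obtain ⟨κ, hκ, hκ1, hκa⟩ : ∃ κ : ℝ, 0 < κ ∧ κ ≤ 1 ∧ κ*(ν*s) ≤ Real.log b*ε/3 := by
    refine ⟨min 1 (Real.log b*ε/3/(ν*s)), lt_min one_pos (by positivity), min_le_left _ _, ?_⟩
    rw [← le_div_iff₀ ha]
    exact min_le_right _ _
  have hθ : 0 ≤ 1-θ := by linarith
  have hθ1 : θ + (1-θ)*κ ≤ 1 := by nlinarith
  have hlog0 : 0 ≤ Real.log (1 + lam*(ν*s)) := by
    apply Real.log_nonneg
    have : 0 < lam*(ν*s) := by positivity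
    linarith
  have hr : 0 < R*Real.log b := by positivity
  have conv := converse (θ := θ + (1-θ)*κ) (r := R*Real.log b) (δ' := Real.log b*ε/3) hν hs
    (by positivity) hθ1 hl hl1 (by
      have e : (1-(θ+(1-θ)*κ))*Real.log (1 + lam*(ν*s)) =
        (1-κ)*((1-θ)*Real.log (1 + lam*(ν*s))) := by ring
      rw [e]
      have := mul_le_mul_of_nonneg_left hI (show 0 ≤ 1-κ by linarith)
      nlinarith) (by positivity)
  have hcost : (θ + (1-θ)*κ)*(ν*s) + (1-(θ+(1-θ)*κ))*Dl ≤ Real.log b * sSup S + Real.log b*ε/3 := by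
    have e : (θ + (1-θ)*κ)*(ν*s) + (1-(θ+(1-θ)*κ))*Dl =
      (θ*(ν*s) + (1-θ)*Dl) + (1-θ)*(κ*(ν*s)) - (1-θ)*κ*Dl := by ring
    have e1 : (1-θ)*(κ*(ν*s)) ≤ κ*(ν*s) := mul_le_of_le_one_left (by positivity) (by linarith)
    have e2 : 0 ≤ (1-θ)*κ*Dl := by positivity
    rw [e]; linarith
  have hsmall : ∀ᶠ n : ℕ in atTop, Real.log 2 / (n:ℝ) < Real.log b*ε/3 :=
    (tendsto_const_div_atTop_nhds_zero_nat (Real.log 2)).eventually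
      (gt_mem_nhds (show 0 < Real.log b*ε/3 by positivity))
  have hmain : ∀ᶠ n : ℕ in atTop, ∀ E ∈ expSet ν s b R n, E ≤ sSup S + ε := by
    filter_upwards [conv, hsmall, eventually_gt_atTop 0] with n hn hn2 hn0
    rintro E ⟨x, D, hx, hDv, rfl⟩
    have hn0' : (0:ℝ) < n := by exact_mod_cast hn0
    have hM : Real.exp (n*(R*Real.log b)) ≤ 2*(numMsg b R n : ℝ) := by
      have e : Real.exp (n*(R*Real.log b)) = b^((n:ℝ)*R) := by
        rw [Real.rpow_def_of_pos (by linarith)]; ring_nf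
      rw [e]
      have h1 : (1:ℝ) ≤ numMsg b R n := by
        unfold numMsg
        have : 1 ≤ ⌊b ^ ((n : ℝ) * R)⌋₊ := by
          rw [Nat.one_le_floor_iff]
          exact Real.one_le_rpow hb.le (by positivity)
        exact_mod_cast this
      have h2 := Nat.lt_floor_add_one (b^((n:ℝ)*R))
      unfold numMsg at h1 ⊢
      linarith
    have key := hn _ hM x D hx hDv
    have hlog := Real.log_le_log (by positivity) key
    rw [Real.log_div (Real.exp_pos _).ne' (by norm_num), Real.log_exp] at hlog
    unfold Real.logb
    have e3 : Real.log 2 = n * (Real.log 2 / n) := by field_simp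
    rw [show -(1/(n:ℝ)) * (Real.log (errProb ν n (numMsg b R n) x D) / Real.log b) =
      (-Real.log (errProb ν n (numMsg b R n) x D)) / (n*Real.log b) by field_simp,
      div_le_iff₀ (by positivity)]
    have e4 := mul_le_mul_of_nonneg_left hn2.le hn0'.le
    have e5 := mul_le_mul_of_nonneg_left hcost hn0'.le
    rw [← e3] at e4
    linarith
  have hev : ∀ᶠ n : ℕ in atTop, sSup (expSet ν s b R n) ≤ sSup S + ε := by
    filter_upwards [hmain] with n hn
    exact csSup_le ⟨0, zero_mem_expSet hν hs hb hR n⟩ hn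
  have hev0 : ∀ᶠ n : ℕ in atTop, 0 ≤ sSup (expSet ν s b R n) := by
    filter_upwards [hmain] with n hn
    exact le_csSup ⟨_, hn⟩ (zero_mem_expSet hν hs hb hR n)
  exact limsup_le_of_le (isCoboundedUnder_le_of_eventually_le _ hev0) hev
end
end

section
/- Let p ≥ 1 be real and let P_XY ∈ P_n(X_n × Y_n) be a joint type such that its marginals satisfy E_{P_X}[|X|^p] ≤ c_X and E_{P_Y}[|Y|^p] ≤ c_Y. Then the supports satisfy: |S(P_XY)| ≤ c₁ n^{(2 + p(α+β))/(2+p)}, |S(P_X)| ≤ c₂ n^{(1 + pα)/(1+p)}, and |S(P_Y)| ≤ c₃ n^{(1 + pβ)/(1+p)}, where c₁ = [ (3√π/2)( 2^{max{0, 1/2 − 1/p}} (c_X + c_Y)^{1/p} + 1/√6 ) ]^{2p/(2+p)}, c₂ = (4 c_X^{1/p} + 1)^{p/(1+p)}, and c₃ = (4 c_Y^{1/p} + 1)^{p/(1+p)}. -/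
open Set

noncomputable section

/-- A joint type with denominator `n` on the product of lattice alphabets
`{iΔx : i ∈ ℤ} × {jΔy : j ∈ ℤ}`. -/
def IsJointType (n : ℕ) (Δx Δy : ℝ) (P : ℝ × ℝ → ℝ) : Prop :=
  (∀ z, 0 ≤ P z) ∧
    (∀ z, P z ≠ 0 → (∃ i : ℤ, z.1 = (i : ℝ) * Δx) ∧ ∃ j : ℤ, z.2 = (j : ℝ) * Δy) ∧
    (∀ z, ∃ k : ℕ, P z = (k : ℝ) / n) ∧ (Function.support P).Finite ∧ ∑ᶠ z, P z = 1

/-- The `x`-marginal of a joint type. -/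
def margX (P : ℝ × ℝ → ℝ) (x : ℝ) : ℝ := ∑ᶠ y, P (x, y)

/-- The `y`-marginal of a joint type. -/
def margY (P : ℝ × ℝ → ℝ) (y : ℝ) : ℝ := ∑ᶠ x, P (x, y)

/-- `c₁` of Lemma 2. -/
def c1 (p cX cY : ℝ) : ℝ :=
  ((3 * Real.sqrt Real.pi / 2) *
      ((2 : ℝ) ^ (max 0 (1 / 2 - 1 / p)) * (cX + cY) ^ (1 / p) + 1 / Real.sqrt 6)) ^
    (2 * p / (2 + p))

/-- `c₂` of Lemma 2. -/
def c2 (p cX : ℝ) : ℝ := (4 * cX ^ (1 / p) + 1) ^ (p / (1 + p))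

/-- `c₃` of Lemma 2. -/
def c3 (p cY : ℝ) : ℝ := (4 * cY ^ (1 / p) + 1) ^ (p / (1 + p))


lemma sum_tri (R : ℕ) : ∑ i ∈ Finset.Icc (-(R:ℤ)) R, ((R:ℤ) - |i|) = (R:ℤ)^2 := by
  induction R with
  | zero => simp
  | succ k ih =>
    have h1 : Finset.Icc (-((k+1:ℕ):ℤ)) ((k+1:ℕ):ℤ) = insert (-((k+1:ℕ):ℤ)) (insert ((k+1:ℕ):ℤ) (Finset.Icc (-(k:ℤ)) k)) := by
      ext i; simp only [Finset.mem_Icc, Finset.mem_insert]; push_cast; omega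
    rw [h1, Finset.sum_insert, Finset.sum_insert]
    · have : ∑ i ∈ Finset.Icc (-(k:ℤ)) k, (((k+1:ℕ):ℤ) - |i|) = ∑ i ∈ Finset.Icc (-(k:ℤ)) k, ((k:ℤ) - |i|) + (2*k+1) := by
        have hc : ((Finset.Icc (-(k:ℤ)) k).card : ℤ) = 2*k+1 := by
          rw [Int.card_Icc]; omega
        rw [← hc, Finset.card_eq_sum_ones]; push_cast; rw [← Finset.sum_add_distrib]
        apply Finset.sum_congr rfl; intros; ring
      rw [this, ih, abs_neg, abs_of_nonneg (by positivity)]; push_cast; ring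
    · simp only [Finset.mem_Icc]; push_cast; omega
    · simp only [Finset.mem_insert, Finset.mem_Icc]; push_cast; omega

lemma sum_abs_ge (T : Finset ℤ) : ((T.card:ℝ)^2 - 1)/4 ≤ ∑ i ∈ T, |(i:ℝ)| := by
  have key : ∀ R : ℕ, (T.card:ℤ) * R - (R:ℤ)^2 ≤ ∑ i ∈ T, |i| := by
    intro R
    have h : ∑ i ∈ T, ((R:ℤ) - |i|) ≤ ∑ i ∈ Finset.Icc (-(R:ℤ)) R, ((R:ℤ) - |i|) := by
      rw [← Finset.sum_filter_add_sum_filter_not T (fun i => |i| ≤ (R:ℤ))]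
      have h2 : ∑ i ∈ T with ¬ |i| ≤ (R:ℤ), ((R:ℤ) - |i|) ≤ 0 := by
        apply Finset.sum_nonpos; intro i hi; simp at hi; omega
      have h3 : ∑ i ∈ T with |i| ≤ (R:ℤ), ((R:ℤ) - |i|) ≤ ∑ i ∈ Finset.Icc (-(R:ℤ)) R, ((R:ℤ) - |i|) := by
        apply Finset.sum_le_sum_of_subset_of_nonneg
        · intro i hi; simp [abs_le] at hi ⊢; exact hi.2
        · intro i hi _; simp only [Finset.mem_Icc] at hi
          have := abs_le.2 hi; omega
      linarith
    rw [sum_tri, Finset.sum_sub_distrib] at h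
    simp only [Finset.sum_const, nsmul_eq_mul] at h
    linarith
  have h0 : ((T.card:ℤ)^2 - 1) ≤ 4 * ∑ i ∈ T, |i| := by
    rcases Nat.even_or_odd' T.card with ⟨k, hk | hk⟩
    · have := key k; rw [hk] at this ⊢; push_cast at this ⊢; nlinarith
    · have := key k; rw [hk] at this ⊢; push_cast at this ⊢; nlinarith
  have h1 : ((T.card:ℝ)^2 - 1) ≤ 4 * ∑ i ∈ T, |(i:ℝ)| := by exact_mod_cast h0
  linarith

/-- power mean step -/
lemma pm {ι : Type*} (S : Finset ι) (hS : S.Nonempty) (f : ι → ℝ) (hf : ∀ i, 0 ≤ f i) (p B : ℝ) (hp : 1 ≤ p)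
    (h : ∑ i ∈ S, f i ^ p ≤ B) :
    (S.card:ℝ)^(1/p) * ∑ i ∈ S, f i ≤ S.card * B^(1/p) := by
  have h1 := Real.rpow_sum_le_const_mul_sum_rpow S f hp
  simp only [abs_of_nonneg (hf _)] at h1
  have hN : (0:ℝ) < S.card := by exact_mod_cast hS.card_pos
  have hs : 0 ≤ ∑ i ∈ S, f i := Finset.sum_nonneg fun i _ => hf i
  have hB : 0 ≤ B := le_trans (Finset.sum_nonneg fun i _ => Real.rpow_nonneg (hf i) p) h
  have hp0 : 0 < p := by linarith
  rw [← Real.rpow_le_rpow_iff (z := p) (by positivity) (by positivity) hp0]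
  rw [Real.mul_rpow (by positivity) hs, Real.mul_rpow hN.le (by positivity), ← Real.rpow_mul hN.le,
    ← Real.rpow_mul hB, one_div_mul_cancel hp0.ne', Real.rpow_one, Real.rpow_one]
  calc _ ≤ (S.card:ℝ) * ((S.card:ℝ)^(p-1) * ∑ i ∈ S, f i ^ p) := by gcongr
    _ ≤ (S.card:ℝ) * ((S.card:ℝ)^(p-1) * B) := by gcongr
    _ = _ := by
      rw [← mul_assoc]; congr 1
      nth_rw 1 [← Real.rpow_one (S.card:ℝ)]
      rw [← Real.rpow_add hN]; ring_nf

lemma one_dim (n : ℕ) (hn : 0 < n) (p c α : ℝ) (hp : 1 ≤ p) (hα : 0 < α) (T : Finset ℤ)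
    (hT : ∑ i ∈ T, (|(i:ℝ) * (n:ℝ)^(-α)|)^p ≤ n * c) :
    (T.card:ℝ) ≤ (4 * c ^ (1 / p) + 1) ^ (p / (1 + p)) * (n : ℝ) ^ ((1 + p * α) / (1 + p)) := by
  have hn0 : (0:ℝ) < n := by exact_mod_cast hn
  have hn1 : (1:ℝ) ≤ n := by exact_mod_cast hn
  have hp0 : 0 < p := by linarith
  have hc : 0 ≤ c := by
    have : 0 ≤ (n:ℝ) * c := le_trans (Finset.sum_nonneg fun i _ => by positivity) hT
    exact nonneg_of_mul_nonneg_right this hn0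
  rcases T.eq_empty_or_nonempty with rfl | hne
  · simp; positivity
  have h := pm T hne (fun i : ℤ => |(i:ℝ) * (n:ℝ)^(-α)|) (fun i => abs_nonneg _) p _ hp hT
  set N : ℝ := (T.card : ℝ) with hNdef
  have hN1 : 1 ≤ N := by
    rw [hNdef]; exact_mod_cast Nat.succ_le_of_lt hne.card_pos
  have hN0 : 0 < N := by linarith
  have habs : ∑ i ∈ T, |(i:ℝ) * (n:ℝ)^(-α)| = (∑ i ∈ T, |(i:ℝ)|) * (n:ℝ)^(-α) := by
    rw [Finset.sum_mul]; apply Finset.sum_congr rfl; intro i _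
    rw [abs_mul, abs_of_nonneg (a := (n:ℝ)^(-α)) (by positivity)]
  have hge := sum_abs_ge T
  rw [habs, Real.rpow_neg hn0.le, Real.mul_rpow hn0.le hc] at h
  set C := c^(1/p)
  have hC : 0 ≤ C := by positivity
  set A := N^(1/p)
  have hA : 0 < A := by positivity
  have hAN : A ≤ N := by
    calc A ≤ N^(1:ℝ) := Real.rpow_le_rpow_of_exponent_le hN1 (by rw [div_le_one hp0]; exact hp)
      _ = N := Real.rpow_one N
  have hD : 0 < (n:ℝ)^α := by positivity
  have hM : 1 ≤ (n:ℝ)^(1/p) * (n:ℝ)^α := by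
    have := Real.one_le_rpow hn1 hα.le
    have h2 := Real.one_le_rpow hn1 (z := 1/p) (by positivity)
    nlinarith
  have h' : A * (∑ i ∈ T, |(i:ℝ)|) ≤ N * C * ((n:ℝ)^(1/p) * (n:ℝ)^α) := by
    have := mul_le_mul_of_nonneg_right h hD.le
    field_simp at this
    nlinarith
  set M := (n:ℝ)^(1/p) * (n:ℝ)^α with hMdef
  have h2 : A * ((N^2-1)/4) ≤ N * C * M := le_trans (by gcongr) h'
  have h3 : N * A ≤ (4*C+1) * M := by
    have : N * (N * A) ≤ N * ((4*C+1) * M) := by nlinarith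
    exact le_of_mul_le_mul_left this hN0
  have h4 : N = (N * A)^(p/(1+p)) := by
    have : N * A = N^((1+p)/p) := by
      rw [add_div, div_self hp0.ne', Real.rpow_add hN0, Real.rpow_one, mul_comm]
    rw [this, ← Real.rpow_mul hN0.le]
    have : (1+p)/p * (p/(1+p)) = 1 := by field_simp
    rw [this, Real.rpow_one]
  rw [h4]
  calc (N*A)^(p/(1+p)) ≤ ((4*C+1)*M)^(p/(1+p)) := by gcongr
    _ = _ := by
      rw [Real.mul_rpow (by positivity) (by positivity)]
      congr 1
      rw [hMdef, ← Real.rpow_add hn0, ← Real.rpow_mul hn0.le]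
      congr 1; field_simp

section
open MeasureTheory

lemma cone_int (R : ℝ) (hR : 0 ≤ R) :
    ∫ u : ℝ × ℝ, max 0 (R - √(u.1^2+u.2^2)) = Real.pi * R^3 / 3 := by
  rw [← integral_comp_polarCoord_symm, polarCoord_target]
  have h1 : ∀ q ∈ Ioi (0:ℝ) ×ˢ Ioo (-Real.pi) Real.pi,
      q.1 • max 0 (R - √((polarCoord.symm q).1^2+(polarCoord.symm q).2^2)) = (q.1 * max 0 (R - q.1)) * (fun _ : ℝ => (1:ℝ)) q.2 := by
    intro q hq
    have : (polarCoord.symm q).1^2+(polarCoord.symm q).2^2 = q.1^2 := by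
      simp [polarCoord_symm_apply]
      nlinarith [Real.sin_sq_add_cos_sq q.2]
    rw [this, Real.sqrt_sq (le_of_lt hq.1)]; simp
  rw [setIntegral_congr_fun (measurableSet_Ioi.prod measurableSet_Ioo) h1, Measure.volume_eq_prod,
    setIntegral_prod_mul (fun r : ℝ => r * max 0 (R - r)) (fun _ : ℝ => (1:ℝ))]
  have h2 : ∫ r in Ioi (0:ℝ), r * max 0 (R - r) = ∫ r in Ioc 0 R, r * (R - r) := by
    rw [setIntegral_eq_of_subset_of_forall_sdiff_eq_zero (s := Ioc 0 R) measurableSet_Ioi (fun r hr => hr.1)]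
    · apply setIntegral_congr_fun measurableSet_Ioc
      intro r hr; simp only; rw [max_eq_right (by linarith [hr.2])]
    · intro r hr
      have : R ≤ r := by
        by_contra h; exact hr.2 ⟨hr.1, by linarith⟩
      rw [max_eq_left (by linarith), mul_zero]
  rw [h2, ← intervalIntegral.integral_of_le hR]
  have h3 : ∫ r in (0:ℝ)..R, r * (R - r) = R^3/6 := by
    simp only [mul_sub, ← pow_two]
    rw [intervalIntegral.integral_sub (Continuous.intervalIntegrable (by fun_prop) _ _) (Continuous.intervalIntegrable (by fun_prop) _ _)]
    rw [intervalIntegral.integral_mul_const, integral_id, integral_pow]; norm_num; ring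
  rw [h3]
  simp [Real.pi_pos.le]; ring_nf
  

lemma cone_integrable (R : ℝ) : Integrable (fun u : ℝ × ℝ => max 0 (R - √(u.1^2+u.2^2))) := by
  apply Continuous.integrable_of_hasCompactSupport (by fun_prop)
  apply HasCompactSupport.intro (K := Icc (-|R|) |R| ×ˢ Icc (-|R|) |R|) (isCompact_Icc.prod isCompact_Icc)
  intro u hu
  apply max_eq_left
  by_contra h
  push Not at h
  apply hu
  have a1 : |u.1| ≤ √(u.1^2+u.2^2) := Real.abs_le_sqrt (by nlinarith [sq_nonneg u.2])
  have a2 : |u.2| ≤ √(u.1^2+u.2^2) := Real.abs_le_sqrt (by nlinarith [sq_nonneg u.1])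
  have := le_abs_self R
  exact ⟨abs_le.1 (by linarith), abs_le.1 (by linarith)⟩

def cell (a b : ℝ) (z : ℝ × ℝ) : Set (ℝ × ℝ) := Ioc (z.1 - a/2) (z.1 + a/2) ×ˢ Ioc (z.2 - b/2) (z.2 + b/2)

lemma cell_meas (a b : ℝ) (z : ℝ × ℝ) : MeasurableSet (cell a b z) := measurableSet_Ioc.prod measurableSet_Ioc

lemma poly_int (a b A B : ℝ) (ha : 0 ≤ a) (hb : 0 ≤ b) (z : ℝ × ℝ) :
    ∫ u in cell a b z, (A - B * (u.1^2+u.2^2)) = a * b * (A - B * (z.1^2+z.2^2 + (a^2+b^2)/12)) := by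
  unfold cell
  rw [Measure.volume_eq_prod, setIntegral_prod]
  · rw [← intervalIntegral.integral_of_le (by linarith)]
    have h1 : ∀ x : ℝ, ∫ y in Ioc (z.2 - b/2) (z.2 + b/2), (A - B * (x^2+y^2)) = b * (A - B * z.2^2 - B * b^2/12) - b * B * x^2 := by
      intro x
      rw [← intervalIntegral.integral_of_le (by linarith)]
      have : ∀ y : ℝ, A - B * (x^2+y^2) = (A - B * x^2) - B * y^2 := by intro y; ring
      simp only [this]
      rw [intervalIntegral.integral_sub (Continuous.intervalIntegrable (by fun_prop) _ _) (Continuous.intervalIntegrable (by fun_prop) _ _), intervalIntegral.integral_const, intervalIntegral.integral_const_mul, integral_pow]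
      norm_num; ring
    simp only [h1]
    rw [intervalIntegral.integral_sub (Continuous.intervalIntegrable (by fun_prop) _ _) (Continuous.intervalIntegrable (by fun_prop) _ _), intervalIntegral.integral_const, intervalIntegral.integral_const_mul, integral_pow]
    norm_num; ring
  · rw [← Measure.volume_eq_prod]
    apply IntegrableOn.mono_set (t := Icc (z.1 - a/2) (z.1 + a/2) ×ˢ Icc (z.2 - b/2) (z.2 + b/2))
    · apply ContinuousOn.integrableOn_compact (isCompact_Icc.prod isCompact_Icc)
      fun_prop
    · exact prod_mono Ioc_subset_Icc_self Ioc_subset_Icc_self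

lemma poly_integrable (a b A B : ℝ) (z : ℝ × ℝ) :
    IntegrableOn (fun u : ℝ × ℝ => A - B * (u.1^2+u.2^2)) (cell a b z) := by
    apply IntegrableOn.mono_set (t := Icc (z.1 - a/2) (z.1 + a/2) ×ˢ Icc (z.2 - b/2) (z.2 + b/2))
    · apply ContinuousOn.integrableOn_compact (isCompact_Icc.prod isCompact_Icc)
      fun_prop
    · exact prod_mono Ioc_subset_Icc_self Ioc_subset_Icc_self

lemma cell_lower (a b R : ℝ) (ha : 0 ≤ a) (hb : 0 ≤ b) (ha1 : a ≤ 1) (hb1 : b ≤ 1) (z : ℝ × ℝ) :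
    a * b * (R - √(z.1^2+z.2^2) - 1/√6) ≤ ∫ u in cell a b z, max 0 (R - √(u.1^2+u.2^2)) := by
  set s := √(z.1^2+z.2^2) with hs
  have hs0 : 0 ≤ s := Real.sqrt_nonneg _
  have hss : s^2 = z.1^2+z.2^2 := Real.sq_sqrt (by positivity)
  have h6 : 0 < 1/√6 := by positivity
  have h66 : (1/√6)^2 = 1/6 := by rw [div_pow, Real.sq_sqrt (by norm_num)]; norm_num
  set e := 1/√6
  set t := s + e with ht
  have ht0 : 0 < t := by positivity
  have hmono : ∫ u in cell a b z, ((R - t/2) - (1/(2*t)) * (u.1^2+u.2^2)) ≤ ∫ u in cell a b z, max 0 (R - √(u.1^2+u.2^2)) := by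
    apply setIntegral_mono (poly_integrable _ _ _ _ _) (cone_integrable R).integrableOn
    intro u
    refine le_trans ?_ (le_max_right _ _)
    have hu := Real.sq_sqrt (show 0 ≤ u.1^2+u.2^2 by positivity)
    set w := √(u.1^2+u.2^2)
    simp only
    rw [← hu]
    have : w ≤ t/2 + 1/(2*t) * w^2 := by
      have : t/2 + 1/(2*t) * w^2 - w = (t-w)^2/(2*t) := by field_simp; ring
      have h2 : 0 ≤ (t-w)^2/(2*t) := by positivity
      linarith
    linarith
  refine le_trans ?_ hmono
  rw [poly_int _ _ _ _ ha hb]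
  apply mul_le_mul_of_nonneg_left _ (by positivity)
  have h1 : z.1^2+z.2^2 + (a^2+b^2)/12 ≤ t^2 := by
    rw [← hss, ht]; nlinarith [mul_nonneg hs0 h6.le]
  have h2 : 1/(2*t) * (z.1^2+z.2^2 + (a^2+b^2)/12) ≤ 1/(2*t) * t^2 := by gcongr
  have h3 : 1/(2*t) * t^2 = t/2 := by field_simp
  linarith

lemma coord_disj (a : ℝ) (ha : 0 < a) (i j : ℤ) (x : ℝ) (h1 : x ∈ Ioc (i*a - a/2) (i*a+a/2)) (h2 : x ∈ Ioc (j*a - a/2) (j*a+a/2)) : i = j := by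
  have e1 : ((i:ℝ) - j) < 1 := by
    by_contra h; push Not at h
    nlinarith [h1.1, h2.2]
  have e2 : ((j:ℝ) - i) < 1 := by
    by_contra h; push Not at h
    nlinarith [h1.2, h2.1]
  have e1' : i - j < 1 := by exact_mod_cast e1
  have e2' : j - i < 1 := by exact_mod_cast e2
  omega

lemma two_dim_sum (a b R : ℝ) (hR : 0 ≤ R) (ha : 0 < a) (hb : 0 < b) (ha1 : a ≤ 1) (hb1 : b ≤ 1) (S : Finset (ℝ × ℝ))
    (hS : ∀ z ∈ S, (∃ i : ℤ, z.1 = (i : ℝ) * a) ∧ ∃ j : ℤ, z.2 = (j : ℝ) * b) :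
    a * b * (S.card * (R - 1/√6) - ∑ z ∈ S, √(z.1^2+z.2^2)) ≤ Real.pi * R^3 / 3 := by
  rw [← cone_int R hR]
  have hd : Set.Pairwise (S : Set (ℝ × ℝ)) (Function.onFun Disjoint (cell a b)) := by
    intro z hz w hw hzw
    rw [Function.onFun, Set.disjoint_left]
    intro u hu hu'
    apply hzw
    obtain ⟨⟨i, hi⟩, j, hj⟩ := hS z hz
    obtain ⟨⟨i', hi'⟩, j', hj'⟩ := hS w hw
    unfold cell at hu hu'
    rw [hi, hj] at hu
    rw [hi', hj'] at hu'
    have := coord_disj a ha i i' u.1 hu.1 hu'.1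
    have := coord_disj b hb j j' u.2 hu.2 hu'.2
    subst i' j'
    exact Prod.ext (by rw [hi, hi']) (by rw [hj, hj'])
  have h1 := setIntegral_le_integral (s := ⋃ z ∈ S, cell a b z) (cone_integrable R) (Filter.Eventually.of_forall fun u => le_max_left _ _)
  rw [integral_biUnion_finset S (fun z _ => cell_meas a b z) hd (fun z _ => (cone_integrable R).integrableOn)] at h1
  refine le_trans ?_ h1
  refine le_trans (le_of_eq ?_) (Finset.sum_le_sum fun z _ => cell_lower a b R ha.le hb.le ha1 hb1 z)
  rw [← Finset.mul_sum]
  simp only [Finset.sum_sub_distrib, Finset.sum_const, nsmul_eq_mul]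
  ring

end

lemma norm_ineq (p x y : ℝ) (hp : 1 ≤ p) :
    √(x^2+y^2)^p ≤ ((2:ℝ)^(max 0 (1/2-1/p)))^p * (|x|^p+|y|^p) := by
  have hp0 : 0 < p := by linarith
  have e1 : √(x^2+y^2)^p = (|x|^2+|y|^2)^(p/2) := by
    rw [Real.sqrt_eq_rpow, ← Real.rpow_mul (by positivity), sq_abs, sq_abs]; congr 1; ring
  have e2 : ∀ t : ℝ, |t|^p = (|t|^2)^(p/2) := by
    intro t
    rw [← Real.rpow_natCast, ← Real.rpow_mul (abs_nonneg t)]; congr 1; push_cast; ring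
  rw [e1, e2 x, e2 y, ← Real.rpow_mul (by norm_num)]
  rcases le_total p 2 with h | h
  · refine le_trans (Real.rpow_add_le_add_rpow (by positivity) (by positivity) (by positivity) (by linarith)) ?_
    apply le_mul_of_one_le_left (by positivity)
    apply Real.one_le_rpow (by norm_num)
    exact mul_nonneg (le_max_left _ _) hp0.le
  · have h3 := NNReal.rpow_add_le_mul_rpow_add_rpow (Real.toNNReal (|x|^2)) (Real.toNNReal (|y|^2)) (p := p/2) (by linarith)
    have h4 := NNReal.coe_le_coe.2 h3
    push_cast at h4
    rw [Real.coe_toNNReal _ (by positivity), Real.coe_toNNReal _ (by positivity)] at h4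
    have : max 0 (1/2-1/p) = 1/2-1/p := by
      apply max_eq_right
      have := one_div_le_one_div_of_le (by norm_num) h
      linarith
    rw [this]
    have : (1/2-1/p)*p = p/2-1 := by field_simp
    rw [this]; exact h4

lemma two_dim (n : ℕ) (hn : 0 < n) (p c α β : ℝ) (hp : 1 ≤ p) (hα : 0 < α) (hβ : 0 < β) (S : Finset (ℝ × ℝ))
    (hS : ∀ z ∈ S, (∃ i : ℤ, z.1 = (i : ℝ) * (n:ℝ)^(-α)) ∧ ∃ j : ℤ, z.2 = (j : ℝ) * (n:ℝ)^(-β))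
    (hcard : (S.card:ℝ) ≤ n) (hmom : ∑ z ∈ S, (|z.1|^p+|z.2|^p) ≤ n * c) :
    (S.card:ℝ) ≤ ((3 * √Real.pi / 2) *
      ((2 : ℝ) ^ (max 0 (1 / 2 - 1 / p)) * c ^ (1 / p) + 1 / √6)) ^
    (2 * p / (2 + p)) * (n : ℝ) ^ ((2 + p * (α + β)) / (2 + p)) := by
  have hn0 : (0:ℝ) < n := by exact_mod_cast hn
  have hn1 : (1:ℝ) ≤ n := by exact_mod_cast hn
  have hp0 : 0 < p := by linarith
  have hc : 0 ≤ c := by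
    have : 0 ≤ (n:ℝ) * c := le_trans (Finset.sum_nonneg fun i _ => by positivity) hmom
    exact nonneg_of_mul_nonneg_right this hn0
  rcases S.eq_empty_or_nonempty with rfl | hne
  · simp; positivity
  set K := (2:ℝ)^(max 0 (1/2-1/p)) with hK
  have hK0 : 0 < K := by positivity
  have hB : ∑ z ∈ S, √(z.1^2+z.2^2)^p ≤ K^p * (n * c) := by
    refine le_trans (Finset.sum_le_sum fun z _ => norm_ineq p z.1 z.2 hp) ?_
    rw [← Finset.mul_sum]; gcongr
  have h := pm S hne (fun z => √(z.1^2+z.2^2)) (fun z => Real.sqrt_nonneg _) p _ hp hB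
  rw [Real.mul_rpow (by positivity) (by positivity), ← Real.rpow_mul hK0.le, mul_one_div_cancel hp0.ne',
    Real.rpow_one, Real.mul_rpow hn0.le hc] at h
  have ha1 : (n:ℝ)^(-α) ≤ 1 := Real.rpow_le_one_of_one_le_of_nonpos hn1 (by linarith)
  have hb1 : (n:ℝ)^(-β) ≤ 1 := Real.rpow_le_one_of_one_le_of_nonpos hn1 (by linarith)
  have ha0 : 0 < (n:ℝ)^(-α) := by positivity
  have hb0 : 0 < (n:ℝ)^(-β) := by positivity
  set N : ℝ := (S.card : ℝ) with hNdef
  have hN1 : 1 ≤ N := by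
    rw [hNdef]; exact_mod_cast Nat.succ_le_of_lt hne.card_pos
  have hN0 : 0 < N := by linarith
  have hab : (n:ℝ)^(-α) * (n:ℝ)^(-β) = ((n:ℝ)^((α+β)/2))⁻¹^2 := by
    rw [← Real.rpow_neg hn0.le, ← Real.rpow_natCast, ← Real.rpow_mul hn0.le, ← Real.rpow_add hn0]
    congr 1; push_cast; ring
  set D := (n:ℝ)^((α+β)/2) with hD
  have hD0 : 0 < D := by positivity
  have hpi := Real.pi_pos
  have hsp : √Real.pi ^ 2 = Real.pi := Real.sq_sqrt hpi.le
  have hsp0 : 0 < √Real.pi := by positivity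
  have hsN : √N ^ 2 = N := Real.sq_sqrt hN0.le
  have hsN0 : 0 < √N := by positivity
  set R := √N / (√Real.pi * D) with hR
  have hR0 : 0 < R := by positivity
  have hmain := two_dim_sum _ _ R hR0.le ha0 hb0 ha1 hb1 S hS
  rw [hab] at hmain
  have hR2 : Real.pi * R^2 = N * D⁻¹^2 := by
    rw [hR, div_pow, mul_pow, hsp, hsN]; field_simp
  set s := ∑ z ∈ S, √(z.1^2+z.2^2)
  set e := 1/√6
  have he : 0 < e := by positivity
  have h1 : N * (R - e) - s ≤ N * R / 3 := by
    have : D⁻¹^2 * (N * (R - e) - s) ≤ D⁻¹^2 * (N * R / 3) := by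
      refine le_trans hmain (le_of_eq ?_)
      linear_combination (R/3) * hR2
    exact le_of_mul_le_mul_left this (by positivity)
  set A := N^(1/p) with hA
  have hA0 : 0 < A := by positivity
  set Q := (n:ℝ)^(1/p) with hQ
  have hAQ : A ≤ Q := by rw [hA, hQ]; gcongr
  set C := c^(1/p)
  have hC : 0 ≤ C := by positivity
  have h2 : A * R ≤ 3/2 * (K * C + e) * Q := by
    have : N * (A * R) ≤ N * (3/2 * (K * C + e) * Q) := by
      have h3 := mul_le_mul_of_nonneg_left h1 hA0.le
      have h4 := mul_le_mul_of_nonneg_left hAQ (mul_pos hN0 he).le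
      nlinarith
    exact le_of_mul_le_mul_left this hN0
  have h3 : √N * A ≤ (3 * √Real.pi / 2) * (K * C + e) * (Q * D) := by
    have h4 : √N = R * (√Real.pi * D) := by rw [hR]; field_simp
    rw [h4]
    have := mul_le_mul_of_nonneg_right h2 (show 0 ≤ √Real.pi * D by positivity)
    linarith
  have h4 : N = (√N * A)^(2*p/(2+p)) := by
    have : √N * A = N^((2+p)/(2*p)) := by
      rw [Real.sqrt_eq_rpow, hA, ← Real.rpow_add hN0]; congr 1; field_simp; ring
    rw [this, ← Real.rpow_mul hN0.le]
    have : (2+p)/(2*p) * (2*p/(2+p)) = 1 := by field_simp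
    rw [this, Real.rpow_one]
  rw [h4]
  calc (√N*A)^(2*p/(2+p)) ≤ ((3 * √Real.pi / 2) * (K * C + e) * (Q * D))^(2*p/(2+p)) := by gcongr
    _ = _ := by
      rw [Real.mul_rpow (by positivity) (by positivity)]
      congr 1
      rw [hQ, hD, ← Real.rpow_add hn0, ← Real.rpow_mul hn0.le]
      congr 1; field_simp

lemma type_ge {n : ℕ} (hn : 0 < n) {a b : ℝ} {P : ℝ × ℝ → ℝ} (hP : IsJointType n a b P) {z : ℝ × ℝ} (hz : P z ≠ 0) :
    1 ≤ n * P z := by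
  obtain ⟨k, hk⟩ := hP.2.2.1 z
  have hn0 : (0:ℝ) < n := by exact_mod_cast hn
  have hk0 : k ≠ 0 := by rintro rfl; simp at hk; exact hz hk
  rw [hk, mul_div_cancel₀ _ hn0.ne']
  exact_mod_cast Nat.one_le_iff_ne_zero.2 hk0

lemma swap_type {n : ℕ} {a b : ℝ} {P : ℝ × ℝ → ℝ} (hP : IsJointType n a b P) :
    IsJointType n b a (P ∘ Prod.swap) := by
  obtain ⟨h1, h2, h3, h4, h5⟩ := hP
  refine ⟨fun z => h1 _, fun z hz => (h2 _ hz).symm, fun z => h3 _, ?_, ?_⟩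
  · have : Function.support (P ∘ Prod.swap) = Prod.swap ⁻¹' Function.support P := rfl
    rw [this]
    exact h4.preimage Prod.swap_injective.injOn
  · rw [← h5]
    exact finsum_comp_equiv (Equiv.prodComm ℝ ℝ)

lemma margX_eq {P : ℝ × ℝ → ℝ} (hf : (Function.support P).Finite) (x : ℝ) :
    margX P x = ∑ z ∈ hf.toFinset with z.1 = x, P z := by
  unfold margX
  rw [finsum_eq_sum_of_support_subset (s := (hf.toFinset.filter (fun z => z.1 = x)).image Prod.snd)]
  · rw [Finset.sum_image]
    · apply Finset.sum_congr rfl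
      rintro ⟨u, v⟩ hz
      simp at hz
      simp [hz.2]
    · rintro ⟨u, v⟩ hz ⟨u', v'⟩ hz' h
      simp at hz hz' h
      simp [hz.2, hz'.2, h]
  · intro y hy
    simp at hy ⊢
    exact hy

lemma margX_moment {P : ℝ × ℝ → ℝ} (hf : (Function.support P).Finite) (g : ℝ → ℝ) :
    (∑ᶠ x, margX P x * g x) = ∑ z ∈ hf.toFinset, P z * g z.1 := by
  rw [finsum_eq_sum_of_support_subset (s := hf.toFinset.image Prod.fst)]
  · rw [← Finset.sum_fiberwise_of_maps_to (g := Prod.fst) (t := hf.toFinset.image Prod.fst) (fun z hz => Finset.mem_image_of_mem _ hz)]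
    apply Finset.sum_congr rfl
    intro x _
    rw [margX_eq hf, Finset.sum_mul]
    apply Finset.sum_congr rfl
    intro z hz
    rw [(Finset.mem_filter.1 hz).2]
  · intro x hx
    have hx : margX P x ≠ 0 := left_ne_zero_of_mul hx
    rw [margX_eq hf] at hx
    obtain ⟨z, hz, _⟩ := Finset.exists_ne_zero_of_sum_ne_zero hx
    rw [Finset.mem_filter] at hz
    simp only [Finset.coe_image, Set.mem_image]
    exact ⟨z, hz.1, hz.2⟩

lemma margX_bound (n : ℕ) (hn : 0 < n) (p c α b : ℝ) (hp : 1 ≤ p) (hα : 0 < α)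
    (P : ℝ × ℝ → ℝ) (hP : IsJointType n ((n : ℝ) ^ (-α)) b P)
    (hc : (∑ᶠ x, margX P x * |x| ^ p) ≤ c) :
    ((Function.support (margX P)).ncard : ℝ) ≤ (4 * c ^ (1 / p) + 1) ^ (p / (1 + p)) * (n : ℝ) ^ ((1 + p * α) / (1 + p)) := by
  have hn0 : (0:ℝ) < n := by exact_mod_cast hn
  have hf := hP.2.2.2.1
  have ha0 : 0 < (n:ℝ)^(-α) := by positivity
  have hnn : ∀ x, 0 ≤ margX P x := fun x => by
    rw [margX_eq hf]; exact Finset.sum_nonneg fun z _ => hP.1 z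
  have hsub : ∀ x, margX P x ≠ 0 → ∃ z, P z ≠ 0 ∧ z.1 = x := by
    intro x hx
    rw [margX_eq hf] at hx
    obtain ⟨z, hz, h⟩ := Finset.exists_ne_zero_of_sum_ne_zero hx
    exact ⟨z, h, (Finset.mem_filter.1 hz).2⟩
  have hge : ∀ x, margX P x ≠ 0 → 1 ≤ n * margX P x := by
    intro x hx
    obtain ⟨z, hz, hzx⟩ := hsub x hx
    refine le_trans (type_ge hn hP hz) ?_
    gcongr
    rw [margX_eq hf]
    exact Finset.single_le_sum (f := P) (fun z _ => hP.1 z) (by simp [hz, hzx])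
  have hfin : (Function.support (margX P)).Finite := by
    apply (hf.image Prod.fst).subset
    intro x hx
    obtain ⟨z, hz, hzx⟩ := hsub x hx
    exact ⟨z, hz, hzx⟩
  have hinj : Function.Injective (fun i : ℤ => (i:ℝ) * (n:ℝ)^(-α)) := by
    intro i j h
    exact_mod_cast mul_right_cancel₀ ha0.ne' h
  have hlat : ∀ x, margX P x ≠ 0 → ∃ i : ℤ, (i:ℝ) * (n:ℝ)^(-α) = x := by
    intro x hx
    obtain ⟨z, hz, hzx⟩ := hsub x hx
    obtain ⟨i, hi⟩ := (hP.2.1 z hz).1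
    exact ⟨i, by rw [← hi, hzx]⟩
  set T : Finset ℤ := hfin.toFinset.preimage (fun i : ℤ => (i:ℝ) * (n:ℝ)^(-α)) hinj.injOn with hT
  have himg : T.image (fun i : ℤ => (i:ℝ) * (n:ℝ)^(-α)) = hfin.toFinset := by
    classical
    rw [hT, Finset.image_preimage]
    apply Finset.filter_true_of_mem
    intro x hx
    exact hlat x (by simpa using hx)
  have hcard : (Function.support (margX P)).ncard = T.card := by
    rw [Set.ncard_eq_toFinset_card _ hfin, ← himg, Finset.card_image_of_injective _ hinj]
  rw [hcard]
  apply one_dim n hn p c α hp hα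
  have : ∑ i ∈ T, (|(i:ℝ) * (n:ℝ)^(-α)|)^p = ∑ x ∈ hfin.toFinset, |x|^p := by
    rw [← himg, Finset.sum_image hinj.injOn]
  rw [this]
  rw [finsum_eq_sum_of_support_subset (s := hfin.toFinset)] at hc
  · refine le_trans ?_ (mul_le_mul_of_nonneg_left hc hn0.le)
    rw [Finset.mul_sum]
    apply Finset.sum_le_sum
    intro x hx
    rw [← mul_assoc]
    exact le_mul_of_one_le_left (by positivity) (hge x (by simpa using hx))
  · intro x hx
    simpa using left_ne_zero_of_mul hx

/-- Lemma 2 (Support of a type): bounds on the supports of a joint type and its marginals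
under generalized power constraints. -/
theorem support_of_type
    (n : ℕ) (hn : 0 < n) (p cX cY α β : ℝ) (hp : 1 ≤ p)
    (hα : α ∈ Set.Ioo (0 : ℝ) 1) (hβ : β ∈ Set.Ioo (0 : ℝ) 1)
    (P : ℝ × ℝ → ℝ) (hP : IsJointType n ((n : ℝ) ^ (-α)) ((n : ℝ) ^ (-β)) P)
    (hcX : (∑ᶠ x, margX P x * |x| ^ p) ≤ cX)
    (hcY : (∑ᶠ y, margY P y * |y| ^ p) ≤ cY) :
    ((Function.support P).ncard : ℝ) ≤ c1 p cX cY * (n : ℝ) ^ ((2 + p * (α + β)) / (2 + p)) ∧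
    ((Function.support (margX P)).ncard : ℝ) ≤ c2 p cX * (n : ℝ) ^ ((1 + p * α) / (1 + p)) ∧
    ((Function.support (margY P)).ncard : ℝ) ≤ c3 p cY * (n : ℝ) ^ ((1 + p * β) / (1 + p)) := by
  have hn0 : (0:ℝ) < n := by exact_mod_cast hn
  have hf := hP.2.2.2.1
  refine ⟨?_, margX_bound n hn p cX α _ hp hα.1 P hP hcX,
    margX_bound n hn p cY β _ hp hβ.1 (P ∘ Prod.swap) (swap_type hP) hcY⟩
  rw [Set.ncard_eq_toFinset_card _ hf]
  have hmem : ∀ z ∈ hf.toFinset, P z ≠ 0 := fun z hz => by simpa using hz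
  apply two_dim n hn p (cX + cY) α β hp hα.1 hβ.1
  · intro z hz
    exact hP.2.1 z (hmem z hz)
  · have h1 := hP.2.2.2.2
    rw [finsum_eq_sum_of_support_subset (s := hf.toFinset) P (by simp)] at h1
    rw [← mul_one (n:ℝ), ← h1, Finset.mul_sum, Finset.card_eq_sum_ones]
    push_cast
    exact Finset.sum_le_sum fun z hz => type_ge hn hP (hmem z hz)
  · have hX := hcX
    rw [margX_moment hf (fun x => |x|^p)] at hX
    have hf' := (swap_type hP).2.2.2.1
    have hY : ∑ z ∈ hf.toFinset, P z * |z.2|^p ≤ cY := by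
      refine le_trans (le_of_eq ?_) hcY
      have h2 := margX_moment hf' (fun x => |x|^p)
      refine Eq.trans ?_ h2.symm
      apply Finset.sum_equiv (Equiv.prodComm ℝ ℝ)
      · intro z; simp
      · intro z _; simp
    refine le_trans ?_ (mul_le_mul_of_nonneg_left (add_le_add hX hY) hn0.le)
    rw [← Finset.sum_add_distrib, Finset.mul_sum]
    apply Finset.sum_le_sum
    intro z hz
    have := type_ge hn hP (hmem z hz)
    rw [← mul_add, ← mul_assoc]
    exact le_mul_of_one_le_left (by positivity) this
end
end

section
/- Let p ≥ 1 be real, let α, β, γ ∈ (0,1) with α + β + γ = 1, and let P_XY ∈ P_n(X_n × Y_n) be a joint type whose marginals satisfy E_{P_X}[|X|^p] ≤ c_X and E_{P_Y}[|Y|^p] ≤ c_Y. Then, with c₁ = [ (3√π/2)( 2^{max{0, 1/2 − 1/p}} (c_X + c_Y)^{1/p} + 1/√6 ) ]^{2p/(2+p)}, c₂ = (4 c_X^{1/p} + 1)^{p/(1+p)}, c₃ = (4 c_Y^{1/p} + 1)^{p/(1+p)}: (i) H(P_XY) − c₁ log_b(n+1)/n^{γp/(2+p)} ≤ (1/n)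 log_b |T(P_XY)| ≤ H(P_XY); (ii) H(P_X) − c₂ log_b(n+1)/n^{(1−α)p/(1+p)} ≤ (1/n) log_b |T(P_X)| ≤ H(P_X); (iii) H(P_Y) − c₃ log_b(n+1)/n^{(1−β)p/(1+p)} ≤ (1/n) log_b |T(P_Y)| ≤ H(P_Y). -/
open Set

noncomputable section

/-- Empirical distribution of a sequence `z` of length `n`. -/
def empDist {γ : Type*} (n : ℕ) (z : Fin n → γ) (a : γ) : ℝ :=
  (({k : Fin n | z k = a}).ncard : ℝ) / n

/-- The type class `T(P)`: sequences of length `n` whose empirical distribution equals `P`. -/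
def typeClass {γ : Type*} (n : ℕ) (P : γ → ℝ) : Set (Fin n → γ) :=
  {z | ∀ a, empDist n z a = P a}

/-- Entropy with base-`b` logarithm. -/
def entropy {γ : Type*} (b : ℝ) (P : γ → ℝ) : ℝ := -∑ᶠ a, P a * Real.logb b (P a)

lemma stc_typeClass_ncard {γ : Type*} (n : ℕ) (hn : 0 < n) (S : Finset γ) (c : γ → ℕ)
    (hS : ∀ a, a ∉ S → c a = 0) (hsum : ∑ a ∈ S, c a = n) (P : γ → ℝ)
    (hP : ∀ a, P a = (c a : ℝ) / n) : (typeClass n P).ncard = Nat.multinomial S c := by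
  classical
  have hn' : (n : ℝ) ≠ 0 := by positivity
  let d : γ →₀ ℕ := Finsupp.onFinset S c (fun a ha => by by_contra h; exact ha (hS a h))
  have hd : d.support ⊆ S := Finsupp.support_onFinset_subset
  have key : ∀ z : Fin n → γ, z ∈ typeClass n P ↔ (∑ i, Finsupp.single (z i) 1 : γ →₀ ℕ) = d := by
    intro z
    have h1 : ∀ a, ({k : Fin n | z k = a}).ncard = (∑ i, Finsupp.single (z i) 1 : γ →₀ ℕ) a := by
      intro a
      rw [Finsupp.finsetSum_apply]
      simp only [Finsupp.single_apply]
      rw [Finset.sum_boole, Set.ncard_eq_toFinset_card']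
      simp
    rw [Finsupp.ext_iff]
    simp only [typeClass, empDist, Set.mem_ofPred_eq, hP]
    refine forall_congr' fun a => ?_
    rw [h1 a, div_left_inj' hn', Nat.cast_inj]
    rfl
  have hset : typeClass n P = ↑((Fintype.piFinset fun _ : Fin n => S).filter
      (fun z => (∑ i, Finsupp.single (z i) 1 : γ →₀ ℕ) = d)) := by
    ext z
    rw [key]
    simp only [Finset.coe_filter, Set.mem_ofPred_eq, Fintype.mem_piFinset]
    constructor
    · intro h
      refine ⟨fun i => ?_, h⟩
      by_contra hi
      have h2 : d (z i) = 0 := hS _ hi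
      rw [← h, Finsupp.finsetSum_apply, Finset.sum_eq_zero_iff] at h2
      simpa using h2 i (Finset.mem_univ i)
    · exact fun h => h.2
  rw [hset, Set.ncard_coe_finset]
  have e1 : MvPolynomial.coeff d ((∑ a ∈ S, (MvPolynomial.X a : MvPolynomial γ ℕ)) ^ n)
      = ((Fintype.piFinset fun _ : Fin n => S).filter
      (fun z => (∑ i, Finsupp.single (z i) 1 : γ →₀ ℕ) = d)).card := by
    rw [Finset.sum_pow', MvPolynomial.coeff_sum, Finset.card_filter]
    refine Finset.sum_congr rfl fun z _ => ?_
    have : (∏ i, (MvPolynomial.X (z i) : MvPolynomial γ ℕ)) =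
        MvPolynomial.monomial (∑ i, Finsupp.single (z i) 1) 1 := by
      rw [MvPolynomial.monomial_sum_one]; rfl
    rw [this, MvPolynomial.coeff_monomial]
  rw [← e1]
  let A : γ →₀ ℕ := Finsupp.indicator S (fun _ _ => 1)
  have hA : A.linearCombination ℕ (MvPolynomial.X : γ → MvPolynomial γ ℕ)
      = ∑ a ∈ S, (MvPolynomial.X a : MvPolynomial γ ℕ) := by
    rw [Finsupp.linearCombination_apply, Finsupp.sum_of_support_subset (s := S)]
    · refine Finset.sum_congr rfl fun a ha => ?_
      simp [A, Finsupp.indicator_of_mem ha]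
    · exact Finsupp.support_indicator_subset _ _
    · simp
  rw [← hA, MvPolynomial.coeff_linearCombination_X_pow, if_pos]
  · have : (d.prod fun r m => A r ^ m) = 1 := by
      refine Finset.prod_eq_one fun a ha => ?_
      simp [A, Finsupp.indicator_of_mem (hd ha)]
    rw [this, mul_one, ← Finsupp.multinomial_of_support_subset hd]
    rfl
  · rw [Finsupp.sum_of_support_subset _ hd _ (by simp)]
    exact hsum

lemma stc_fact (c k : ℕ) : c.factorial * c ^ k ≤ k.factorial * c ^ c := by
  rcases le_total c k with h | h
  · calc c.factorial * c ^ k = c.factorial * c ^ (k - c) * c ^ c := by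
          rw [mul_assoc, ← pow_add, Nat.sub_add_cancel h]
      _ ≤ _ := Nat.mul_le_mul_right _ (Nat.factorial_mul_pow_sub_le_factorial h)
  · obtain ⟨m, rfl⟩ := Nat.exists_eq_add_of_le h
    have : (k + m).factorial ≤ k.factorial * (k + m) ^ m := by
      rw [← Nat.factorial_mul_ascFactorial]
      exact Nat.mul_le_mul_left _ (Nat.ascFactorial_le_pow_add _ _)
    calc _ ≤ k.factorial * (k + m) ^ m * (k + m) ^ k := Nat.mul_le_mul_right _ this
      _ = _ := by ring

lemma stc_multinomial_upper {γ : Type*} (n : ℕ) (S : Finset γ) (c : γ → ℕ)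
    (hS : ∀ a, a ∉ S → c a = 0) (hsum : ∑ a ∈ S, c a = n) :
    Nat.multinomial S c * ∏ a ∈ S, c a ^ c a ≤ n ^ n := by
  classical
  have := Finset.sum_pow_eq_sum_piAntidiag S c n
  rw [hsum] at this
  rw [this]
  have hmem : c ∈ Finset.piAntidiag S n := by
    rw [Finset.mem_piAntidiag]
    exact ⟨hsum, fun i hi => by by_contra h; exact hi (hS i h)⟩
  exact Finset.single_le_sum (f := fun k => (Nat.multinomial S k : ℕ) * ∏ i ∈ S, c i ^ k i)
    (fun _ _ => Nat.zero_le _) hmem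

lemma stc_multinomial_lower {γ : Type*} (n : ℕ) (S : Finset γ) (c : γ → ℕ)
    (hsum : ∑ a ∈ S, c a = n) :
    n ^ n ≤ (n + 1) ^ S.card * (Nat.multinomial S c * ∏ a ∈ S, c a ^ c a) := by
  classical
  have := Finset.sum_pow_eq_sum_piAntidiag S c n
  rw [hsum] at this
  rw [this]
  have hcard : (Finset.piAntidiag S n).card ≤ (n + 1) ^ S.card := by
    have : (S.pi fun _ => Finset.range (n + 1)).card = (n + 1) ^ S.card := by
      rw [Finset.card_pi]; simp
    rw [← this]
    refine Finset.card_le_card_of_injOn (fun k a _ => k a) ?_ ?_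
    · intro k hk
      simp only [Finset.mem_coe, Finset.mem_piAntidiag] at hk
      simp only [Finset.mem_coe, Finset.mem_pi, Finset.mem_range]
      intro a ha
      have := Finset.single_le_sum (f := k) (fun _ _ => Nat.zero_le _) ha
      exact Nat.lt_succ_of_le (this.trans hk.1.le)
    · intro k hk l hl hkl
      simp only [Finset.mem_coe, Finset.mem_piAntidiag] at hk hl
      funext a
      by_cases ha : a ∈ S
      · exact congrFun (congrFun hkl a) ha
      · rw [not_imp_comm.1 (hk.2 a) ha, not_imp_comm.1 (hl.2 a) ha]
  refine (Finset.sum_le_card_nsmul _ _ (Nat.multinomial S c * ∏ a ∈ S, c a ^ c a) ?_).trans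
    (Nat.mul_le_mul_right _ hcard)
  intro k hk
  rw [Finset.mem_piAntidiag] at hk
  have hpos : 0 < (∏ a ∈ S, (k a).factorial) * ∏ a ∈ S, (c a).factorial :=
    Nat.mul_pos (Finset.prod_pos fun a _ => Nat.factorial_pos _)
      (Finset.prod_pos fun a _ => Nat.factorial_pos _)
  refine Nat.le_of_mul_le_mul_left ?_ hpos
  have h1 := Nat.multinomial_spec S k
  have h2 := Nat.multinomial_spec S c
  rw [hk.1] at h1
  rw [hsum] at h2
  have h3 : (∏ a ∈ S, (c a).factorial) * ∏ a ∈ S, c a ^ k a ≤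
      (∏ a ∈ S, (k a).factorial) * ∏ a ∈ S, c a ^ c a := by
    rw [← Finset.prod_mul_distrib, ← Finset.prod_mul_distrib]
    exact Finset.prod_le_prod' fun a _ => stc_fact _ _
  calc _ = ((∏ a ∈ S, (k a).factorial) * Nat.multinomial S k) *
        ((∏ a ∈ S, (c a).factorial) * ∏ a ∈ S, c a ^ k a) := by push_cast; ring
    _ ≤ n.factorial * ((∏ a ∈ S, (k a).factorial) * ∏ a ∈ S, c a ^ c a) := by
        rw [h1]; exact Nat.mul_le_mul_left _ h3
    _ = _ := by rw [← h2]; ring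

/-- A type with denominator `n`, given by its counts. -/
structure StcType {γ : Type*} (n : ℕ) (P : γ → ℝ) (S : Finset γ) (c : γ → ℕ) : Prop where
  eq : ∀ a, P a = (c a : ℝ) / n
  mem : ∀ a, a ∈ S ↔ c a ≠ 0
  sum : ∑ a ∈ S, c a = n

lemma stc_bounds {γ : Type*} (n : ℕ) (hn : 0 < n) (b : ℝ) (hb : 1 < b) (S : Finset γ) (c : γ → ℕ)
    (P : γ → ℝ) (h : StcType n P S c) :
    entropy b P - S.card * Real.logb b ((n : ℝ) + 1) / n ≤
        (1 / (n : ℝ)) * Real.logb b ((typeClass n P).ncard) ∧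
      (1 / (n : ℝ)) * Real.logb b ((typeClass n P).ncard) ≤ entropy b P := by
  have hS : ∀ a, a ∉ S → c a = 0 := fun a ha => by
    by_contra h'; exact ha ((h.mem a).2 h')
  have hn0 : (0 : ℝ) < n := by exact_mod_cast hn
  rw [stc_typeClass_ncard n hn S c hS h.sum P h.eq]
  have hc : ∀ a ∈ S, (0 : ℝ) < c a := fun a ha => by
    exact_mod_cast Nat.pos_of_ne_zero ((h.mem a).1 ha)
  have hent : n * entropy b P = n * Real.logb b n - ∑ a ∈ S, c a * Real.logb b (c a) := by
    have : ∑ᶠ a, P a * Real.logb b (P a) = ∑ a ∈ S, P a * Real.logb b (P a) := by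
      refine finsum_eq_sum_of_support_subset _ ?_
      intro a ha
      by_contra hh
      apply ha
      have := hS a hh
      simp [h.eq, this]
    rw [entropy, this]
    have h2 : (n : ℝ) = ∑ a ∈ S, (c a : ℝ) := by exact_mod_cast h.sum.symm
    have h3 : (n : ℝ) * ∑ a ∈ S, P a * Real.logb b (P a)
        = ∑ a ∈ S, c a * Real.logb b (c a) - n * Real.logb b n := by
      conv_rhs => rw [h2]
      rw [Finset.mul_sum, ← h2, h2, Finset.sum_mul, ← Finset.sum_sub_distrib, ← h2]
      refine Finset.sum_congr rfl fun a ha => ?_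
      rw [h.eq, Real.logb_div (hc a ha).ne' hn0.ne']
      field_simp
    linarith
  set M := Nat.multinomial S c with hM
  have hMpos : (0 : ℝ) < M := by exact_mod_cast Nat.multinomial_pos S c
  have hQpos : (0 : ℝ) < ∏ a ∈ S, (c a : ℝ) ^ c a := Finset.prod_pos fun a ha => pow_pos (hc a ha) _
  have hlogQ : Real.logb b (∏ a ∈ S, (c a : ℝ) ^ c a) = ∑ a ∈ S, c a * Real.logb b (c a) := by
    rw [Real.logb_prod _ _ (fun a ha => (pow_pos (hc a ha) _).ne')]
    exact Finset.sum_congr rfl fun a _ => Real.logb_pow ..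
  have u : (M : ℝ) * ∏ a ∈ S, (c a : ℝ) ^ c a ≤ (n : ℝ) ^ n := by
    exact_mod_cast stc_multinomial_upper n S c hS h.sum
  have l : (n : ℝ) ^ n ≤ ((n : ℝ) + 1) ^ S.card * (M * ∏ a ∈ S, (c a : ℝ) ^ c a) := by
    exact_mod_cast stc_multinomial_lower n S c h.sum
  have u' := Real.logb_le_logb_of_le hb (by positivity) u
  have l' := Real.logb_le_logb_of_le hb (by positivity) l
  rw [Real.logb_mul hMpos.ne' hQpos.ne', hlogQ, Real.logb_pow] at u'
  rw [Real.logb_mul (by positivity) (by positivity), Real.logb_mul hMpos.ne' hQpos.ne', hlogQ,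
    Real.logb_pow, Real.logb_pow] at l'
  constructor
  · rw [← mul_le_mul_iff_right₀ hn0, mul_sub, hent]
    field_simp
    linarith
  · rw [← mul_le_mul_iff_right₀ hn0, hent]
    field_simp
    linarith

/-- `Q` is the image of `P` under `f`, via a finite support. -/
lemma stc_marg {γ : Type*} (n : ℕ) (P : γ → ℝ) (S : Finset γ) (c : γ → ℕ)
    (h : StcType n P S c) (f : γ → ℝ) (Q : ℝ → ℝ)
    (hQ : ∀ x, Q x = ∑ z ∈ S with f z = x, P z) :
    ∃ c' : ℝ → ℕ, StcType n Q (S.image f) c' := by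
  classical
  refine ⟨fun x => ∑ z ∈ S with f z = x, c z, ⟨fun x => ?_, fun x => ?_, ?_⟩⟩
  · rw [hQ]
    push_cast
    rw [Finset.sum_div]
    exact Finset.sum_congr rfl fun z _ => h.eq z
  · simp only [Finset.mem_image, ne_eq, Finset.sum_eq_zero_iff, Finset.mem_filter]
    constructor
    · rintro ⟨z, hz, rfl⟩ h'
      exact (h.mem z).1 hz (h' z ⟨hz, rfl⟩)
    · intro h'
      push Not at h'
      obtain ⟨z, hz, _⟩ := h'
      exact ⟨z, hz⟩
  · rw [Finset.sum_fiberwise_of_maps_to (fun z hz => Finset.mem_image_of_mem f hz)]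
    exact h.sum

lemma stc_marg_moment {γ : Type*} (P : γ → ℝ) (S : Finset γ) (f : γ → ℝ) (Q : ℝ → ℝ)
    (hQ : ∀ x, Q x = ∑ z ∈ S with f z = x, P z) (g : ℝ → ℝ) :
    ∑ᶠ x, Q x * g x = ∑ z ∈ S, P z * g (f z) := by
  classical
  rw [finsum_eq_sum_of_support_subset (s := S.image f)]
  · rw [← Finset.sum_fiberwise_of_maps_to (fun z hz => Finset.mem_image_of_mem f hz)]
    refine Finset.sum_congr rfl fun x _ => ?_
    rw [hQ, Finset.sum_mul]
    refine Finset.sum_congr rfl fun z hz => ?_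
    rw [(Finset.mem_filter.1 hz).2]
  · intro x hx
    by_contra hh
    apply hx
    have : Q x = 0 := by
      rw [hQ, Finset.sum_eq_zero]
      intro z hz
      rw [Finset.mem_filter] at hz
      exact absurd (Finset.mem_coe.2 (Finset.mem_image.2 ⟨z, hz⟩)) hh
    simp [this]

/-- Sum over the support is at most `n` times the expectation. -/
lemma stc_sum_le {γ : Type*} (n : ℕ) (hn : 0 < n) (P : γ → ℝ) (S : Finset γ) (c : γ → ℕ)
    (h : StcType n P S c) (g : γ → ℝ) (hg : ∀ z, 0 ≤ g z) :
    ∑ z ∈ S, g z ≤ n * ∑ z ∈ S, P z * g z := by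
  have hn0 : (0 : ℝ) < n := by exact_mod_cast hn
  rw [Finset.mul_sum]
  refine Finset.sum_le_sum fun z hz => ?_
  have : (1 : ℝ) ≤ c z := by exact_mod_cast Nat.pos_of_ne_zero ((h.mem z).1 hz)
  rw [h.eq]
  have : (n : ℝ) * (c z / n * g z) = c z * g z := by field_simp
  rw [this]
  nlinarith [hg z]

lemma stc_margX (P : ℝ × ℝ → ℝ) (S : Finset (ℝ × ℝ)) (hS : ∀ z, z ∉ S → P z = 0) (x : ℝ) :
    margX P x = ∑ z ∈ S with z.1 = x, P z := by
  classical
  rw [margX, finsum_eq_sum_of_support_subset (s := (S.filter (fun z => z.1 = x)).image Prod.snd)]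
  · rw [Finset.sum_image]
    · refine Finset.sum_congr rfl fun z hz => ?_
      rw [← (Finset.mem_filter.1 hz).2]
    · intro z hz w hw hzw
      simp only [Finset.mem_coe, Finset.mem_filter] at hz hw
      exact Prod.ext (hz.2.trans hw.2.symm) hzw
  · intro y hy
    have : (x, y) ∈ S := by
      by_contra h'; exact hy (hS _ h')
    simp only [Finset.coe_image, Set.mem_image, Finset.mem_coe, Finset.mem_filter]
    exact ⟨(x, y), ⟨this, rfl⟩, rfl⟩

lemma stc_margY (P : ℝ × ℝ → ℝ) (S : Finset (ℝ × ℝ)) (hS : ∀ z, z ∉ S → P z = 0) (y : ℝ) :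
    margY P y = ∑ z ∈ S with z.2 = y, P z := by
  classical
  rw [margY, finsum_eq_sum_of_support_subset (s := (S.filter (fun z => z.2 = y)).image Prod.fst)]
  · rw [Finset.sum_image]
    · refine Finset.sum_congr rfl fun z hz => ?_
      rw [← (Finset.mem_filter.1 hz).2]
    · intro z hz w hw hzw
      simp only [Finset.mem_coe, Finset.mem_filter] at hz hw
      exact Prod.ext hzw (hz.2.trans hw.2.symm)
  · intro x hx
    have : (x, y) ∈ S := by
      by_contra h'; exact hx (hS _ h')
    simp only [Finset.coe_image, Set.mem_image, Finset.mem_coe, Finset.mem_filter]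
    exact ⟨(x, y), ⟨this, rfl⟩, rfl⟩

lemma stc_joint (n : ℕ) (hn : 0 < n) (Δx Δy : ℝ) (P : ℝ × ℝ → ℝ) (hP : IsJointType n Δx Δy P) :
    ∃ S c, StcType n P S c := by
  obtain ⟨_, _, h3, h4, h5⟩ := hP
  have hn0 : (n : ℝ) ≠ 0 := by positivity
  choose c hc using h3
  have hm : ∀ a, a ∈ h4.toFinset ↔ c a ≠ 0 := by
    intro a
    simp [hc, hn0]
  refine ⟨h4.toFinset, c, hc, hm, ?_⟩
  rw [finsum_eq_sum_of_support_subset (s := h4.toFinset) _ (by simp)] at h5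
  simp only [hc] at h5
  rw [← Finset.sum_div, div_eq_one_iff_eq hn0] at h5
  exact_mod_cast h5

/-- Power mean for a finite sum. -/
lemma stc_power_mean {γ : Type*} (S : Finset γ) (hS : 0 < S.card) (p : ℝ) (hp : 1 ≤ p) (f : γ → ℝ)
    (hf : ∀ z ∈ S, 0 ≤ f z) (B : ℝ) (hB : ∑ z ∈ S, f z ^ p ≤ B) :
    (∑ z ∈ S, f z) / S.card ≤ (B / S.card) ^ (1 / p) := by
  have hk : (0 : ℝ) < S.card := by exact_mod_cast hS
  have h0 : 0 ≤ ∑ z ∈ S, f z := Finset.sum_nonneg hf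
  rw [one_div, Real.le_rpow_inv_iff_of_pos (by positivity)
    (div_nonneg (le_trans (Finset.sum_nonneg fun z hz => Real.rpow_nonneg (hf z hz) _) hB) hk.le)
    (by linarith), Real.div_rpow h0 hk.le]
  have := Real.rpow_sum_le_const_mul_sum_rpow_of_nonneg S hp hf
  rw [div_le_div_iff₀ (by positivity) hk]
  have e : (S.card : ℝ) ^ p = (S.card : ℝ) ^ (p - 1) * S.card := by
    rw [← Real.rpow_add_one hk.ne']; ring_nf
  rw [e]
  have h1 : (0:ℝ) < (S.card : ℝ) ^ (p - 1) := by positivity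
  nlinarith [mul_le_mul_of_nonneg_left hB h1.le]

lemma stc_int_sum_aux (S : Finset ℤ) : ∀ m : ℤ, ((S.card : ℤ) = 2 * m → m ^ 2 ≤ ∑ i ∈ S, |i|) ∧
    ((S.card : ℤ) = 2 * m + 1 → m ^ 2 + m ≤ ∑ i ∈ S, |i|) := by
  classical
  induction S using Finset.induction_on_max_value (fun i : ℤ => |i|) with
  | empty =>
    intro m
    constructor
    · intro h
      have : m = 0 := by simp at h; omega
      simp [this]
    · intro h
      simp at h; omega
  | insert a s ha hmax ih =>
    have hsub : insert a s ⊆ Finset.Icc (-|a|) |a| := by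
      intro x hx
      rw [Finset.mem_Icc, ← abs_le]
      rcases Finset.mem_insert.1 hx with rfl | hx
      · exact le_rfl
      · exact hmax x hx
    have hc := Finset.card_le_card hsub
    rw [Int.card_Icc, Finset.card_insert_of_notMem ha] at hc
    have h0 := abs_nonneg a
    rw [Finset.card_insert_of_notMem ha, Finset.sum_insert ha]
    push_cast
    intro m
    constructor
    · intro h
      have := (ih (m - 1)).2 (by linarith)
      have h2 : m ≤ |a| := by omega
      nlinarith
    · intro h
      have := (ih m).1 (by linarith)
      have h2 : m ≤ |a| := by omega
      nlinarith

lemma stc_int_sum (S : Finset ℤ) : (S.card : ℤ) ^ 2 - 1 ≤ 4 * ∑ i ∈ S, |i| := by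
  rcases Int.even_or_odd' (S.card : ℤ) with ⟨m, h | h⟩
  · have := (stc_int_sum_aux S m).1 h
    rw [h]; nlinarith
  · have := (stc_int_sum_aux S m).2 h
    rw [h]; nlinarith

lemma stc_line (n : ℕ) (hn : 0 < n) (p α cX : ℝ) (hp : 1 ≤ p) (hα : 0 < α) (S : Finset ℝ)
    (hS : 0 < S.card) (hlat : ∀ x ∈ S, ∃ i : ℤ, x = (i : ℝ) * (n : ℝ) ^ (-α)) (hc : 0 ≤ cX)
    (h : ∑ x ∈ S, |x| ^ p ≤ n * cX) :
    (S.card : ℝ) ≤ (4 * cX ^ (1 / p) + 1) ^ (p / (1 + p)) *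
      (n : ℝ) ^ (1 - (1 - α) * p / (1 + p)) := by
  classical
  have hn0 : (0 : ℝ) < n := by exact_mod_cast hn
  have hn1 : (1 : ℝ) ≤ n := by exact_mod_cast hn
  have hk : (0 : ℝ) < S.card := by exact_mod_cast hS
  have hk1 : (1 : ℝ) ≤ S.card := by exact_mod_cast hS
  set k : ℝ := (S.card : ℝ) with hkdef
  have hp0 : 0 < p := by linarith
  have hΔ : (0 : ℝ) < (n : ℝ) ^ (-α) := by positivity
  have h1 := stc_power_mean S hS p hp (fun x => |x|) (fun _ _ => abs_nonneg _) _ h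
  have h2 : (k ^ 2 - 1) * (n : ℝ) ^ (-α) ≤ 4 * ∑ x ∈ S, |x| := by
    choose! i hi using hlat
    have hinj : Set.InjOn i S := by
      intro x hx y hy hxy
      rw [hi x hx, hi y hy, hxy]
    have h3 := stc_int_sum (S.image i)
    rw [Finset.card_image_of_injOn hinj, Finset.sum_image hinj] at h3
    have h4 : k ^ 2 - 1 ≤ 4 * ∑ x ∈ S, |(i x : ℝ)| := by
      have h3' : (((S.card : ℤ) ^ 2 - 1 : ℤ) : ℝ) ≤ ((4 * ∑ x ∈ S, |i x| : ℤ) : ℝ) := Int.cast_le.2 h3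
      push_cast at h3'
      exact h3'
    have h5 : ∑ x ∈ S, |x| = (∑ x ∈ S, |(i x : ℝ)|) * (n : ℝ) ^ (-α) := by
      rw [Finset.sum_mul]
      refine Finset.sum_congr rfl fun x hx => ?_
      conv_lhs => rw [hi x hx]
      rw [abs_mul, abs_of_pos hΔ]
    rw [h5, ← mul_assoc]
    exact mul_le_mul_of_nonneg_right h4 hΔ.le
  have hq : 0 < 1 / p := by positivity
  have hq1 : 1 / p ≤ 1 := by rw [div_le_one hp0]; exact hp
  set q : ℝ := 1 / p with hqdef
  rw [← hkdef, Real.div_rpow (by positivity) hk.le, Real.mul_rpow hn0.le hc] at h1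
  have hkq : 0 < k ^ q := by positivity
  have h6 : (k ^ 2 - 1) * (n : ℝ) ^ (-α) ≤ 4 * (k * ((n : ℝ) ^ q * cX ^ q / k ^ q)) := by
    rw [div_le_iff₀ hk] at h1
    linarith
  have h7 : k ^ 2 - 1 ≤ 4 * (k * ((n : ℝ) ^ q * cX ^ q / k ^ q)) * (n : ℝ) ^ α := by
    rw [Real.rpow_neg hn0.le, ← div_eq_mul_inv, div_le_iff₀ (by positivity)] at h6
    exact h6
  have h8 : k ^ (1 + q) ≤ (4 * cX ^ q + 1) * (n : ℝ) ^ (α + q) := by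
    have e1 : k ^ (1 + q) = k ^ 2 * (k ^ q / k) := by
      rw [Real.rpow_add hk, Real.rpow_one]; field_simp
    have e2 : k ^ q / k ≤ 1 := by
      rw [div_le_one hk]
      calc k ^ q ≤ k ^ (1 : ℝ) := Real.rpow_le_rpow_of_exponent_le hk1 hq1
        _ = k := Real.rpow_one k
    have e3 : (1 : ℝ) ≤ (n : ℝ) ^ (α + q) := Real.one_le_rpow hn1 (by linarith)
    have e4 : 0 < k ^ q / k := by positivity
    have e5 : 4 * (k * ((n : ℝ) ^ q * cX ^ q / k ^ q)) * (n : ℝ) ^ α * (k ^ q / k)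
        = 4 * cX ^ q * (n : ℝ) ^ (α + q) := by
      rw [Real.rpow_add hn0]; field_simp
    have := mul_le_mul_of_nonneg_right h7 e4.le
    rw [e5] at this
    rw [e1]
    nlinarith
  have h9 := Real.rpow_le_rpow (by positivity) h8 (z := p / (1 + p)) (by positivity)
  have ex1 : (1 + q) * (p / (1 + p)) = 1 := by rw [hqdef]; field_simp; ring
  have ex2 : (α + q) * (p / (1 + p)) = 1 - (1 - α) * p / (1 + p) := by
    rw [hqdef]; field_simp; ring
  rw [← Real.rpow_mul hk.le, ex1, Real.rpow_one, Real.mul_rpow (by positivity) (by positivity),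
    ← Real.rpow_mul hn0.le, ex2] at h9
  exact h9

/-- Euclidean norm on `ℝ × ℝ`. -/
def stcNu (z : ℝ × ℝ) : ℝ := ‖(⟨z.1, z.2⟩ : ℂ)‖

lemma stcNu_eq (z : ℝ × ℝ) : stcNu z = Real.sqrt (z.1 ^ 2 + z.2 ^ 2) := by
  rw [stcNu, Complex.norm_eq_sqrt_sq_add_sq]

lemma stcNu_nonneg (z : ℝ × ℝ) : 0 ≤ stcNu z := norm_nonneg _

lemma stcNu_cont : Continuous stcNu := by
  have : stcNu = fun z => Real.sqrt (z.1 ^ 2 + z.2 ^ 2) := funext stcNu_eq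
  rw [this]; fun_prop

lemma stcNu_tri (z w : ℝ × ℝ) : stcNu w ≤ stcNu z + stcNu (w - z) := by
  have : (⟨w.1, w.2⟩ : ℂ) = ⟨z.1, z.2⟩ + ⟨(w - z).1, (w - z).2⟩ := by
    apply Complex.ext <;> simp
  unfold stcNu
  rw [this]
  exact norm_add_le _ _

open MeasureTheory in
lemma stc_cone_int (R : ℝ) : Integrable (fun w : ℝ × ℝ => max 0 (R - stcNu w)) := by
  apply Continuous.integrable_of_hasCompactSupport
  · have := stcNu_cont
    fun_prop
  · apply HasCompactSupport.intro (isCompact_closedBall (0 : ℝ × ℝ) R)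
    intro w hw
    apply max_eq_left
    have h1 : ‖w‖ ≤ stcNu w := by
      rw [Prod.norm_def, stcNu_eq]
      apply max_le
      · exact Real.abs_le_sqrt (by nlinarith [sq_nonneg w.2])
      · exact Real.abs_le_sqrt (by nlinarith [sq_nonneg w.1])
    simp only [Metric.mem_closedBall, dist_zero_right, not_le] at hw
    linarith

open MeasureTheory in
lemma stc_cone_integral (R : ℝ) (hR : 0 ≤ R) :
    ∫ w : ℝ × ℝ, max 0 (R - stcNu w) = Real.pi * R ^ 3 / 3 := by
  have h1 : ∫ w : ℝ × ℝ, max 0 (R - stcNu w) = ∫ z : ℂ, max 0 (R - ‖z‖) := by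
    rw [← (Complex.volume_preserving_equiv_real_prod.symm).integral_comp
      Complex.measurableEquivRealProd.symm.measurableEmbedding]
    rfl
  rw [h1, integral_fun_norm_addHaar volume (fun x => max 0 (R - x))]
  have h2 : ∫ y in Set.Ioi (0 : ℝ), y ^ (Module.finrank ℝ ℂ - 1) • max 0 (R - y) = R ^ 3 / 6 := by
    rw [Complex.finrank_real_complex]
    have h3 : ∫ y in Set.Ioi (0 : ℝ), y ^ (2 - 1) • max 0 (R - y)
        = ∫ y in Set.Ioc (0 : ℝ) R, y ^ (2 - 1) • max 0 (R - y) := by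
      apply setIntegral_eq_of_subset_of_forall_sdiff_eq_zero measurableSet_Ioi
      · exact fun x hx => hx.1
      · intro x hx
        have : R < x := by
          by_contra h'
          exact hx.2 ⟨hx.1, not_lt.1 h'⟩
        rw [max_eq_left (by linarith)]; simp
    rw [h3]
    have h4 : ∫ y in Set.Ioc (0 : ℝ) R, y ^ (2 - 1) • max 0 (R - y)
        = ∫ y in Set.Ioc (0 : ℝ) R, (R * y - y ^ 2) := by
      refine setIntegral_congr_fun measurableSet_Ioc fun y hy => ?_
      have : max 0 (R - y) = R - y := max_eq_right (by linarith [hy.2])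
      simp only [this, smul_eq_mul]; ring
    rw [h4, ← intervalIntegral.integral_of_le hR, intervalIntegral.integral_sub
      (by apply Continuous.intervalIntegrable; fun_prop)
      (by apply Continuous.intervalIntegrable; fun_prop),
      intervalIntegral.integral_const_mul, integral_id, integral_pow]
    norm_num
    ring
  rw [h2, Complex.finrank_real_complex, Measure.real, Complex.volume_ball]
  simp
  ring

/-- The half-open cell with centre `z`. -/
def stcCell (Δx Δy : ℝ) (z : ℝ × ℝ) : Set (ℝ × ℝ) :=
  Set.Ioc (z.1 - Δx / 2) (z.1 + Δx / 2) ×ˢ Set.Ioc (z.2 - Δy / 2) (z.2 + Δy / 2)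

lemma stcCell_meas (Δx Δy : ℝ) (z : ℝ × ℝ) : MeasurableSet (stcCell Δx Δy z) :=
  measurableSet_Ioc.prod measurableSet_Ioc

lemma stc_sq_int (a D : ℝ) (hD : 0 < D) :
    ∫ x in Set.Ioc (a - D / 2) (a + D / 2), (x - a) ^ 2 = D ^ 3 / 12 := by
  rw [← intervalIntegral.integral_of_le (by linarith),
    intervalIntegral.integral_comp_sub_right (fun x => x ^ 2), integral_pow]
  ring

lemma stc_one_int (a D : ℝ) (hD : 0 < D) :
    ∫ _ in Set.Ioc (a - D / 2) (a + D / 2), (1 : ℝ) = D := by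
  rw [← intervalIntegral.integral_of_le (by linarith)]
  simp

open MeasureTheory in
lemma stcCell_integrable (Δx Δy : ℝ) (z : ℝ × ℝ) (f : ℝ × ℝ → ℝ) (hf : Continuous f) :
    IntegrableOn f (stcCell Δx Δy z) := by
  have : IntegrableOn f
      (Set.Icc (z.1 - Δx / 2) (z.1 + Δx / 2) ×ˢ Set.Icc (z.2 - Δy / 2) (z.2 + Δy / 2)) :=
    hf.continuousOn.integrableOn_compact (isCompact_Icc.prod isCompact_Icc)
  exact this.mono_set (Set.prod_mono Set.Ioc_subset_Icc_self Set.Ioc_subset_Icc_self)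

open MeasureTheory in
lemma stc_cell_bound (Δx Δy : ℝ) (hx : 0 < Δx) (hy : 0 < Δy) (hx1 : Δx ≤ 1) (hy1 : Δy ≤ 1)
    (R : ℝ) (z : ℝ × ℝ) :
    (R - stcNu z - 1 / Real.sqrt 6) * (Δx * Δy) ≤
      ∫ w in stcCell Δx Δy z, max 0 (R - stcNu w) := by
  have i1 : ∫ w in stcCell Δx Δy z, (w.1 - z.1) ^ 2 = Δx ^ 3 / 12 * Δy := by
    have := setIntegral_prod_mul (μ := (volume : Measure ℝ)) (ν := (volume : Measure ℝ))
      (fun x : ℝ => (x - z.1) ^ 2) (fun _ : ℝ => (1 : ℝ))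
      (Set.Ioc (z.1 - Δx / 2) (z.1 + Δx / 2)) (Set.Ioc (z.2 - Δy / 2) (z.2 + Δy / 2))
    rw [stc_sq_int _ _ hx, stc_one_int _ _ hy] at this
    rw [← this]
    simp only [mul_one]
    rfl
  have i2 : ∫ w in stcCell Δx Δy z, (w.2 - z.2) ^ 2 = Δx * (Δy ^ 3 / 12) := by
    have := setIntegral_prod_mul (μ := (volume : Measure ℝ)) (ν := (volume : Measure ℝ))
      (fun _ : ℝ => (1 : ℝ)) (fun x : ℝ => (x - z.2) ^ 2)
      (Set.Ioc (z.1 - Δx / 2) (z.1 + Δx / 2)) (Set.Ioc (z.2 - Δy / 2) (z.2 + Δy / 2))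
    rw [stc_sq_int _ _ hy, stc_one_int _ _ hx] at this
    rw [← this]
    simp only [one_mul]
    rfl
  have i3 : ∀ c : ℝ, ∫ w in stcCell Δx Δy z, c = c * (Δx * Δy) := by
    intro c
    have := setIntegral_prod_mul (μ := (volume : Measure ℝ)) (ν := (volume : Measure ℝ))
      (fun _ : ℝ => (1 : ℝ)) (fun x : ℝ => (1 : ℝ))
      (Set.Ioc (z.1 - Δx / 2) (z.1 + Δx / 2)) (Set.Ioc (z.2 - Δy / 2) (z.2 + Δy / 2))
    rw [stc_one_int _ _ hy, stc_one_int _ _ hx] at this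
    have h2 : ∫ w in stcCell Δx Δy z, c = c * ∫ w in stcCell Δx Δy z, (1 : ℝ) := by
      rw [← integral_const_mul]; simp
    rw [h2, ← this]
    simp only [one_mul]
    rfl
  set s := Real.sqrt 6 with hs
  have hs0 : 0 < s := by positivity
  have hss : s * s = 6 := Real.mul_self_sqrt (by norm_num)
  have hpt : ∀ w : ℝ × ℝ, R - stcNu z - 1 / (2 * s) ≤
      max 0 (R - stcNu w) + s / 2 * ((w.1 - z.1) ^ 2 + (w.2 - z.2) ^ 2) := by
    intro w
    have t1 := stcNu_tri z w
    have t2 : stcNu (w - z) ^ 2 = (w.1 - z.1) ^ 2 + (w.2 - z.2) ^ 2 := by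
      rw [stcNu_eq, Real.sq_sqrt (by positivity)]; rfl
    rw [← t2]
    set u := stcNu (w - z)
    have t3 : u ≤ s / 2 * u ^ 2 + 1 / (2 * s) := by
      have : s / 2 * u ^ 2 + 1 / (2 * s) - u = (s * u - 1) ^ 2 / (2 * s) := by
        field_simp; ring
      have : 0 ≤ (s * u - 1) ^ 2 / (2 * s) := by positivity
      linarith
    have := le_max_right 0 (R - stcNu w)
    linarith
  have hc := stcNu_cont
  have hmono : ∫ w in stcCell Δx Δy z, (R - stcNu z - 1 / (2 * s)) ≤
      ∫ w in stcCell Δx Δy z,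
        (max 0 (R - stcNu w) + s / 2 * ((w.1 - z.1) ^ 2 + (w.2 - z.2) ^ 2)) := by
    apply setIntegral_mono
    · exact stcCell_integrable _ _ _ _ (by fun_prop)
    · exact stcCell_integrable _ _ _ _ (by fun_prop)
    · exact hpt
  rw [i3, integral_add (stcCell_integrable _ _ _ _ (by fun_prop))
      (stcCell_integrable _ _ _ _ (by fun_prop)), integral_const_mul,
    integral_add (stcCell_integrable _ _ _ _ (by fun_prop))
      (stcCell_integrable _ _ _ _ (by fun_prop)), i1, i2] at hmono
  have hA : s / 2 * (Δx ^ 3 / 12 * Δy + Δx * (Δy ^ 3 / 12)) ≤ 1 / (2 * s) * (Δx * Δy) := by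
    have e : 1 / (2 * s) = s / 12 := by
      field_simp; nlinarith
    rw [e]
    have : Δx ^ 2 + Δy ^ 2 ≤ 2 := by nlinarith
    have h3 : 0 < s / 24 * (Δx * Δy) := by positivity
    nlinarith
  have e2 : 1 / s = 1 / (2 * s) + 1 / (2 * s) := by field_simp; norm_num
  rw [e2]
  linarith

lemma stc_int_close (i j : ℤ) (D x : ℝ) (hD : 0 < D)
    (h1 : x ∈ Set.Ioc (i * D - D / 2) (i * D + D / 2))
    (h2 : x ∈ Set.Ioc (j * D - D / 2) (j * D + D / 2)) : i = j := by
  have a1 : (i : ℝ) < j + 1 := by nlinarith [h1.1, h2.2]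
  have a2 : (j : ℝ) < i + 1 := by nlinarith [h2.1, h1.2]
  have b1 : i < j + 1 := by exact_mod_cast a1
  have b2 : j < i + 1 := by exact_mod_cast a2
  omega

open MeasureTheory in
lemma stc_plane_geom (Δx Δy : ℝ) (hx : 0 < Δx) (hy : 0 < Δy) (hx1 : Δx ≤ 1) (hy1 : Δy ≤ 1)
    (S : Finset (ℝ × ℝ))
    (hlat : ∀ z ∈ S, (∃ i : ℤ, z.1 = (i : ℝ) * Δx) ∧ ∃ j : ℤ, z.2 = (j : ℝ) * Δy)
    (R : ℝ) (hR : 0 ≤ R) :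
    (S.card * R - ∑ z ∈ S, stcNu z - S.card * (1 / Real.sqrt 6)) * (Δx * Δy) ≤
      Real.pi * R ^ 3 / 3 := by
  rw [← stc_cone_integral R hR]
  calc _ = ∑ z ∈ S, (R - stcNu z - 1 / Real.sqrt 6) * (Δx * Δy) := by
        rw [← Finset.sum_mul]; simp
    _ ≤ ∑ z ∈ S, ∫ w in stcCell Δx Δy z, max 0 (R - stcNu w) :=
        Finset.sum_le_sum fun z _ => stc_cell_bound Δx Δy hx hy hx1 hy1 R z
    _ = ∫ w in ⋃ z ∈ S, stcCell Δx Δy z, max 0 (R - stcNu w) := by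
        rw [integral_biUnion_finset]
        · exact fun z _ => stcCell_meas _ _ _
        · intro z hz w hw hne
          rw [Function.onFun, Set.disjoint_left]
          intro v hv hv'
          apply hne
          obtain ⟨⟨i, hi⟩, j, hj⟩ := hlat z hz
          obtain ⟨⟨i', hi'⟩, j', hj'⟩ := hlat w hw
          rw [stcCell, Set.mem_prod] at hv hv'
          rw [hi, hj] at hv
          rw [hi', hj'] at hv'
          have e1 := stc_int_close i i' Δx v.1 hx hv.1 hv'.1
          have e2 := stc_int_close j j' Δy v.2 hy hv.2 hv'.2
          exact Prod.ext (by rw [hi, hi', e1]) (by rw [hj, hj', e2])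
        · exact fun z _ => (stc_cone_int R).integrableOn
    _ ≤ _ := setIntegral_le_integral (stc_cone_int R)
        (Filter.Eventually.of_forall fun w => le_max_left _ _)

lemma stcNu_rpow (p : ℝ) (hp : 1 ≤ p) (z : ℝ × ℝ) :
    stcNu z ^ p ≤ ((2 : ℝ) ^ (max 0 (1 / 2 - 1 / p))) ^ p * (|z.1| ^ p + |z.2| ^ p) := by
  have hp0 : 0 < p := by linarith
  have e : ∀ x : ℝ, |x| ^ p = (x ^ 2) ^ (p / 2) := by
    intro x
    rw [← sq_abs, ← Real.rpow_natCast, ← Real.rpow_mul (abs_nonneg x)]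
    congr 1; push_cast; ring
  have e2 : stcNu z ^ p = (z.1 ^ 2 + z.2 ^ 2) ^ (p / 2) := by
    rw [stcNu_eq, Real.sqrt_eq_rpow, ← Real.rpow_mul (by positivity)]
    congr 1; ring
  rw [e, e, e2, ← Real.rpow_mul (by norm_num)]
  rcases le_total 2 p with h | h
  · have : max 0 (1 / 2 - 1 / p) = 1 / 2 - 1 / p := by
      apply max_eq_right
      have : 1 / p ≤ 1 / 2 := one_div_le_one_div_of_le (by norm_num) h
      linarith
    rw [this]
    have e3 : (1 / 2 - 1 / p) * p = p / 2 - 1 := by field_simp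
    rw [e3]
    have := NNReal.rpow_add_le_mul_rpow_add_rpow ⟨z.1 ^ 2, by positivity⟩ ⟨z.2 ^ 2, by positivity⟩
      (p := p / 2) (by linarith)
    exact_mod_cast this
  · have : max 0 (1 / 2 - 1 / p) = 0 := by
      apply max_eq_left
      have : 1 / 2 ≤ 1 / p := one_div_le_one_div_of_le hp0 h
      linarith
    rw [this, zero_mul, Real.rpow_zero, one_mul]
    exact Real.rpow_add_le_add_rpow (by positivity) (by positivity) (by positivity) (by linarith)

lemma stc_plane (n : ℕ) (hn : 0 < n) (p α β gam C : ℝ) (hp : 1 ≤ p) (hα : 0 < α) (hβ : 0 < β)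
    (hsum : α + β + gam = 1) (S : Finset (ℝ × ℝ)) (hS : 0 < S.card) (hSn : S.card ≤ n)
    (hlat : ∀ z ∈ S, (∃ i : ℤ, z.1 = (i : ℝ) * (n : ℝ) ^ (-α)) ∧
      ∃ j : ℤ, z.2 = (j : ℝ) * (n : ℝ) ^ (-β)) (hC : 0 ≤ C)
    (h : ∑ z ∈ S, (|z.1| ^ p + |z.2| ^ p) ≤ n * C) :
    (S.card : ℝ) ≤ ((3 * Real.sqrt Real.pi / 2) *
      ((2 : ℝ) ^ (max 0 (1 / 2 - 1 / p)) * C ^ (1 / p) + 1 / Real.sqrt 6)) ^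
    (2 * p / (2 + p)) * (n : ℝ) ^ (1 - gam * p / (2 + p)) := by
  have hn0 : (0 : ℝ) < n := by exact_mod_cast hn
  have hn1 : (1 : ℝ) ≤ n := by exact_mod_cast hn
  have hk : (0 : ℝ) < S.card := by exact_mod_cast hS
  have hkn : (S.card : ℝ) ≤ n := by exact_mod_cast hSn
  set k : ℝ := (S.card : ℝ) with hkdef
  have hp0 : 0 < p := by linarith
  set A : ℝ := (2 : ℝ) ^ (max 0 (1 / 2 - 1 / p)) with hA
  have hA0 : 0 < A := by positivity
  have hD : (0 : ℝ) < (n : ℝ) ^ (-α) * (n : ℝ) ^ (-β) := by positivity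
  have hDn : (n : ℝ) ^ (-α) * (n : ℝ) ^ (-β) = (n : ℝ) ^ (-(α + β)) := by
    rw [← Real.rpow_add hn0]; ring_nf
  have hB : ∑ z ∈ S, stcNu z ^ p ≤ A ^ p * (n * C) := by
    calc _ ≤ ∑ z ∈ S, A ^ p * (|z.1| ^ p + |z.2| ^ p) :=
          Finset.sum_le_sum fun z _ => stcNu_rpow p hp z
      _ ≤ _ := by
          rw [← Finset.mul_sum]
          exact mul_le_mul_of_nonneg_left h (by positivity)
  have h1 := stc_power_mean S hS p hp stcNu (fun _ _ => stcNu_nonneg _) _ hB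
  rw [← hkdef] at h1
  have hpow : ∀ a : ℝ, 0 < a → (n : ℝ) ^ (-a) ≤ 1 := fun a ha =>
    Real.rpow_le_one_of_one_le_of_nonpos hn1 (by linarith)
  have hg := stc_plane_geom _ _ (by positivity) (by positivity) (hpow α hα) (hpow β hβ) S hlat
  set D := (n : ℝ) ^ (-α) * (n : ℝ) ^ (-β) with hDdef
  set R := Real.sqrt (k * D / Real.pi) with hRdef
  have hR0 : 0 < R := Real.sqrt_pos.2 (by have := Real.pi_pos; positivity)
  have hR2 : Real.pi * R ^ 2 = k * D := by
    rw [hRdef, Real.sq_sqrt (by have := Real.pi_pos; positivity)]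
    have := Real.pi_pos
    field_simp
  have h2 := hg R hR0.le
  rw [← hkdef] at h2
  have h3 : 2 / 3 * R ≤ (∑ z ∈ S, stcNu z) / k + 1 / Real.sqrt 6 := by
    have e : Real.pi * R ^ 3 / 3 = (k * R / 3) * D := by
      have : Real.pi * R ^ 3 / 3 = (Real.pi * R ^ 2) * R / 3 := by ring
      rw [this, hR2]; ring
    rw [e] at h2
    have h4 := le_of_mul_le_mul_right h2 hD
    rw [← sub_le_iff_le_add, le_div_iff₀ hk]
    linarith
  set q : ℝ := 1 / p with hq
  have hq0 : 0 < q := by positivity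
  have h4 : (A ^ p * (n * C) / k) ^ q = (n / k) ^ q * (A * C ^ q) := by
    have : A ^ p * (n * C) / k = A ^ p * ((n / k) * C) := by ring
    rw [this, Real.mul_rpow (by positivity) (by positivity),
      Real.mul_rpow (by positivity) hC, ← Real.rpow_mul hA0.le]
    have : p * q = 1 := by rw [hq]; field_simp
    rw [this, Real.rpow_one]; ring
  have h5 : 1 ≤ (n / k) ^ q := Real.one_le_rpow (by rw [le_div_iff₀ hk]; linarith) hq0.le
  set G : ℝ := A * C ^ q + 1 / Real.sqrt 6 with hG
  have hG0 : 0 ≤ G := by positivity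
  have h6 : 2 / 3 * R ≤ (n / k) ^ q * G := by
    have : 0 ≤ 1 / Real.sqrt 6 := by positivity
    rw [h4] at h1
    rw [hG, mul_add]
    nlinarith
  have hpi : 0 < Real.sqrt Real.pi := Real.sqrt_pos.2 Real.pi_pos
  have h7 : R * Real.sqrt Real.pi = k ^ (1 / 2 : ℝ) * (n : ℝ) ^ (-(α + β) / 2) := by
    rw [hRdef, Real.sqrt_div (by positivity), div_mul_cancel₀ _ hpi.ne', hDn, Real.sqrt_eq_rpow,
      Real.mul_rpow hk.le (by positivity), ← Real.rpow_mul hn0.le]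
    congr 2; ring
  have h8 : k ^ (1 / 2 + q) ≤ (3 * Real.sqrt Real.pi / 2 * G) * (n : ℝ) ^ (q + (α + β) / 2) := by
    have e1 : (n / k) ^ q = (n : ℝ) ^ q / k ^ q := Real.div_rpow hn0.le hk.le _
    have hkq : 0 < k ^ q := by positivity
    have e2 : k ^ (1 / 2 + q) = R * Real.sqrt Real.pi * k ^ q * (n : ℝ) ^ ((α + β) / 2) := by
      rw [h7, Real.rpow_add hk]
      have : (n : ℝ) ^ (-(α + β) / 2) * (n : ℝ) ^ ((α + β) / 2) = 1 := by
        rw [← Real.rpow_add hn0]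
        have : -(α + β) / 2 + (α + β) / 2 = 0 := by ring
        rw [this, Real.rpow_zero]
      linear_combination -(k ^ (1 / 2 : ℝ) * k ^ q) * this
    rw [e2]
    have e3 : R * k ^ q ≤ 3 / 2 * ((n : ℝ) ^ q * G) := by
      have : (n / k) ^ q * k ^ q = (n : ℝ) ^ q := by rw [e1]; field_simp
      have := mul_le_mul_of_nonneg_right h6 hkq.le
      nlinarith
    have hpos : 0 ≤ Real.sqrt Real.pi * (n : ℝ) ^ ((α + β) / 2) := by positivity
    have := mul_le_mul_of_nonneg_right e3 hpos
    rw [Real.rpow_add hn0]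
    linarith
  have h9 := Real.rpow_le_rpow (by positivity) h8 (z := 2 * p / (2 + p)) (by positivity)
  have ex1 : (1 / 2 + q) * (2 * p / (2 + p)) = 1 := by rw [hq]; field_simp; ring
  have ex2 : (q + (α + β) / 2) * (2 * p / (2 + p)) = 1 - gam * p / (2 + p) := by
    have : gam = 1 - (α + β) := by linarith
    rw [hq, this]; field_simp; ring
  rw [← Real.rpow_mul hk.le, ex1, Real.rpow_one, Real.mul_rpow (by positivity) (by positivity),
    ← Real.rpow_mul hn0.le, ex2] at h9
  exact h9

lemma stc_finish (n : ℕ) (hn : 0 < n) (b : ℝ) (hb : 1 < b) (H T k c e : ℝ)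
    (h : H - k * Real.logb b ((n : ℝ) + 1) / n ≤ T) (hk : k ≤ c * (n : ℝ) ^ (1 - e)) :
    H - c * Real.logb b ((n : ℝ) + 1) / (n : ℝ) ^ e ≤ T := by
  have hn0 : (0 : ℝ) < n := by exact_mod_cast hn
  refine le_trans (sub_le_sub_left ?_ H) h
  have hl : 0 ≤ Real.logb b ((n : ℝ) + 1) := Real.logb_nonneg hb (by linarith)
  rw [Real.rpow_sub hn0, Real.rpow_one] at hk
  have hne : 0 < (n : ℝ) ^ e := by positivity
  calc k * Real.logb b ((n : ℝ) + 1) / n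
      ≤ (c * (n / (n : ℝ) ^ e)) * Real.logb b ((n : ℝ) + 1) / n := by gcongr
    _ = _ := by field_simp

/-- Lemma 3 (Size of a type class): exponential bounds on the sizes of the type classes
of a joint type and of its marginals, under generalized power constraints. -/
theorem size_of_type_class
    (n : ℕ) (hn : 0 < n) (b p cX cY α β gam : ℝ) (hb : 1 < b) (hp : 1 ≤ p)
    (hα : α ∈ Set.Ioo (0 : ℝ) 1) (hβ : β ∈ Set.Ioo (0 : ℝ) 1) (hγ : gam ∈ Set.Ioo (0 : ℝ) 1)
    (hsum : α + β + gam = 1)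
    (P : ℝ × ℝ → ℝ) (hP : IsJointType n ((n : ℝ) ^ (-α)) ((n : ℝ) ^ (-β)) P)
    (hcX : (∑ᶠ x, margX P x * |x| ^ p) ≤ cX)
    (hcY : (∑ᶠ y, margY P y * |y| ^ p) ≤ cY) :
    (entropy b P - c1 p cX cY * Real.logb b ((n : ℝ) + 1) / (n : ℝ) ^ (gam * p / (2 + p)) ≤
        (1 / (n : ℝ)) * Real.logb b ((typeClass n P).ncard) ∧
      (1 / (n : ℝ)) * Real.logb b ((typeClass n P).ncard) ≤ entropy b P) ∧
    (entropy b (margX P) -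
          c2 p cX * Real.logb b ((n : ℝ) + 1) / (n : ℝ) ^ ((1 - α) * p / (1 + p)) ≤
        (1 / (n : ℝ)) * Real.logb b ((typeClass n (margX P)).ncard) ∧
      (1 / (n : ℝ)) * Real.logb b ((typeClass n (margX P)).ncard) ≤ entropy b (margX P)) ∧
    (entropy b (margY P) -
          c3 p cY * Real.logb b ((n : ℝ) + 1) / (n : ℝ) ^ ((1 - β) * p / (1 + p)) ≤
        (1 / (n : ℝ)) * Real.logb b ((typeClass n (margY P)).ncard) ∧
      (1 / (n : ℝ)) * Real.logb b ((typeClass n (margY P)).ncard) ≤ entropy b (margY P)) := by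
  classical
  obtain ⟨S, c, hS⟩ := stc_joint n hn _ _ P hP
  have hn0 : (0 : ℝ) < n := by exact_mod_cast hn
  have hP0 : ∀ z, z ∉ S → P z = 0 := by
    intro z hz
    have : c z = 0 := by
      by_contra h'; exact hz ((hS.mem z).2 h')
    rw [hS.eq, this]; simp
  have hlat : ∀ z ∈ S, (∃ i : ℤ, z.1 = (i : ℝ) * (n : ℝ) ^ (-α)) ∧
      ∃ j : ℤ, z.2 = (j : ℝ) * (n : ℝ) ^ (-β) := by
    intro z hz
    apply hP.2.1 z
    have := (hS.mem z).1 hz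
    rw [hS.eq]
    positivity
  have hcard : 0 < S.card := by
    rw [Finset.card_pos, Finset.nonempty_iff_ne_empty]
    rintro rfl
    have := hS.sum
    simp at this
    omega
  have hcardn : S.card ≤ n := by
    rw [← hS.sum, Finset.card_eq_sum_ones]
    exact Finset.sum_le_sum fun z hz => Nat.pos_of_ne_zero ((hS.mem z).1 hz)
  have hmX := stc_margX P S hP0
  have hmY := stc_margY P S hP0
  obtain ⟨cx, hX⟩ := stc_marg n P S c hS Prod.fst (margX P) hmX
  obtain ⟨cy, hY⟩ := stc_marg n P S c hS Prod.snd (margY P) hmY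
  have hsX := stc_marg_moment P S Prod.fst (margX P) hmX (fun x => |x| ^ p)
  have hsY := stc_marg_moment P S Prod.snd (margY P) hmY (fun x => |x| ^ p)
  have hnn : ∀ x : ℝ, 0 ≤ |x| ^ p := fun x => Real.rpow_nonneg (abs_nonneg x) _
  have hcX0 : 0 ≤ cX := by
    refine le_trans ?_ hcX
    rw [hsX]
    exact Finset.sum_nonneg fun z _ => mul_nonneg (hP.1 z) (hnn _)
  have hcY0 : 0 ≤ cY := by
    refine le_trans ?_ hcY
    rw [hsY]
    exact Finset.sum_nonneg fun z _ => mul_nonneg (hP.1 z) (hnn _)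
  have hfin : ∀ (Q : ℝ → ℝ) (T : Finset ℝ) (c' : ℝ → ℕ), StcType n Q T c' →
      ∀ C, (∑ᶠ x, Q x * |x| ^ p) ≤ C → ∑ x ∈ T, |x| ^ p ≤ n * C := by
    intro Q T c' hQ C hC
    refine (stc_sum_le n hn Q T c' hQ _ hnn).trans (mul_le_mul_of_nonneg_left ?_ hn0.le)
    rw [finsum_eq_sum_of_support_subset (s := T)] at hC
    · exact hC
    · intro x hx
      by_contra hh
      apply hx
      have : c' x = 0 := by
        by_contra h'; exact hh ((hQ.mem x).2 h')
      simp [hQ.eq, this]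
  refine ⟨?_, ?_, ?_⟩
  · have hb' := stc_bounds n hn b hb S c P hS
    refine ⟨stc_finish n hn b hb _ _ _ _ _ hb'.1 ?_, hb'.2⟩
    refine stc_plane n hn p α β gam (cX + cY) hp hα.1 hβ.1 hsum S hcard hcardn hlat (by linarith) ?_
    refine (stc_sum_le n hn P S c hS _ fun z => add_nonneg (hnn _) (hnn _)).trans
      (mul_le_mul_of_nonneg_left ?_ hn0.le)
    rw [hsX] at hcX
    rw [hsY] at hcY
    simp only [mul_add, Finset.sum_add_distrib]
    exact add_le_add hcX hcY
  · have hb' := stc_bounds n hn b hb _ _ _ hX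
    refine ⟨stc_finish n hn b hb _ _ _ _ _ hb'.1 ?_, hb'.2⟩
    refine stc_line n hn p α cX hp hα.1 _ ?_ ?_ hcX0 (hfin _ _ _ hX _ hcX)
    · rw [Finset.card_pos, Finset.image_nonempty, ← Finset.card_pos]; exact hcard
    · intro x hx
      obtain ⟨z, hz, rfl⟩ := Finset.mem_image.1 hx
      exact (hlat z hz).1
  · have hb' := stc_bounds n hn b hb _ _ _ hY
    refine ⟨stc_finish n hn b hb _ _ _ _ _ hb'.1 ?_, hb'.2⟩
    refine stc_line n hn p β cY hp hβ.1 _ ?_ ?_ hcY0 (hfin _ _ _ hY _ hcY)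
    · rw [Finset.card_pos, Finset.image_nonempty, ← Finset.card_pos]; exact hcard
    · intro x hx
      obtain ⟨z, hz, rfl⟩ := Finset.mem_image.1 hx
      exact (hlat z hz).2
end
end
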